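/- arXiv:1709.06732 — 2 statements merged into one kernel-verified Lean document; each statement's English description precedes it below -/
import Mathlib

section
/- Let F₀ be a field of characteristic 0 that is finitely generated over ℚ. Then the set of triples (a₁, a₂, [Z₁ : Z₂ : Z₃]) with a₁ > a₂ > 0 integers and [Z₁ : Z₂ : Z₃] a point of the projective plane ℙ²(F₀), satisfying the system 3^{a₁}Z₁³ + 3^{a₂}Z₂³ + Z₃³ = 0 and 3^{a₁}Z₁ + 3^{a₂}Z₂ + Z₃ = 0, is finite. -/
/-!
Eliminating `Z₃` from the system with exponents `a₁ = k + b` and `a₂ = b`, the ratio `t = Z₁ / Z₂`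
satisfies the cubic equation `3 ^ k t³ + 1 = 9 ^ b (3 ^ k t + 1)³`, and it determines the point. So
only finitely many pairs `(k, b)` have to be shown to occur. The ratio `t` is algebraic over `ℚ`,
and the algebraic elements of a finitely generated field form a number field.

* If `21 b ≤ k`, the number `z = 3 ^ k t³` has absolute value about `9 ^ (-k)` at every complex
  place, and `9 ^ (b / 3) (3 ^ k t + 1)` is a cube root of `1 + z`. By the Thue–Siegel method, Padé
  approximants of `(1 + X) ^ (1/3)` at `z` give a gap principle: among the solutions in a given
  number field that share their cube roots of unity, `k` is bounded in terms of the smallest large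
  one, since the norm of a nonzero algebraic integer is at least `1`.
* If `k < 21 b` and the cubic is irreducible, its discriminant is a square in the Galois closure.
  Up to squares it is `-3 (x² - 1) (w² - 1)` with `x, w = 3 ^ (k + b) ± 3 ^ b` and coprime factors,
  so `x² - m y² = 1` for one of finitely many `m`. As `3 ^ b` divides `x`, lifting the exponent
  makes the index of this Pell solution grow exponentially in `b`, whereas `x ≤ 2 ^ (44 b)`.
* If `k < 21 b` and the cubic has a rational root, clearing denominators turns it into
  `p³ + q³ = 9 ^ b u³` with `p`, `q` coprime and of moderate size. A descent in the Eisenstein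
  integers lowers the size of `p`, `q` while retaining the power of `3`, which bounds `b`.
-/

open Finset

namespace PowerSystem

/-! ### Padé approximants of `(1 + X) ^ ν` -/

theorem choose_mul_sub_eq_of_lt {K : Type*} [CommRing K] {m j : ℕ} (h : j < m) :
    (((2 * m - (j + 1)).choose m : ℕ) : K) * (2 * m - j) =
      (2 * m - j).choose m * ((m : K) - j) := by
  obtain ⟨d, rfl⟩ := Nat.exists_eq_add_of_lt h
  have hchoose := Nat.choose_mul_succ_eq (j + 2 * d + 1) (j + d + 1)
  rw [show j + 2 * d + 1 + 1 - (j + d + 1) = d + 1 by omega] at hchoose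
  rw [show 2 * (j + d + 1) - (j + 1) = j + 2 * d + 1 by omega,
    show 2 * (j + d + 1) - j = j + 2 * d + 1 + 1 by omega]
  have hcast := congrArg (Nat.cast : ℕ → K) hchoose
  push_cast at hcast ⊢
  linear_combination hcast

open Polynomial in
theorem eq_C_coeff_mul_X_pow {K : Type*} [Semiring K] {p : K[X]} {n : ℕ} (hdeg : p.natDegree ≤ n)
    (hdvd : (PowerSeries.X : PowerSeries K) ^ n ∣ (p : PowerSeries K)) :
    p = C (p.coeff n) * X ^ n := by
  ext j
  rw [coeff_C_mul, coeff_X_pow]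
  rcases lt_trichotomy j n with h | rfl | h
  · simpa [h.ne] using PowerSeries.X_pow_dvd_iff.1 hdvd j h
  · simp
  · simp [h.ne', coeff_eq_zero_of_natDegree_lt (hdeg.trans_lt h)]

section ODE

open PowerSeries

variable {R : Type*} [CommRing R]

/-- The left-hand side of the differential equation satisfied by the numerators of the Padé
approximants of `(1 + X) ^ ν`. -/
noncomputable def padeODE (ν m : R) (y : R⟦X⟧) : R⟦X⟧ :=
  X * (1 + X) * derivative R (derivative R y) - (C (2 * m) + C (2 * m + ν - 1) * X) * derivative R y
    + C (m * (m + ν)) * y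

theorem padeODE_eq_zero_iff (ν m : R) (y : R⟦X⟧) :
    padeODE ν m y = 0 ↔
      ∀ j : ℕ, ((j : R) + 1) * (2 * m - j) * coeff (j + 1) y =
        (m - j) * (m + ν - j) * coeff j y := by
  have hexpand : padeODE ν m y = X * derivative R (derivative R y)
      + X * (X * derivative R (derivative R y)) - C (2 * m) * derivative R y
      - C (2 * m + ν - 1) * (X * derivative R y) + C (m * (m + ν)) * y := by
    rw [padeODE]; ring
  rw [hexpand, PowerSeries.ext_iff]
  clear hexpand
  generalize hw : 2 * m + ν - 1 = w
  refine forall_congr' fun j ↦ ?_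
  rcases j with _ | _ | j <;>
  · simp only [map_sub, map_add, coeff_C_mul, coeff_succ_X_mul, coeff_zero_X_mul, coeff_derivative,
      map_zero]
    push_cast
    constructor <;> intro h <;> (subst hw; linear_combination -h)

theorem padeODE_mul_eq_zero [IsDomain R] (ν m : R) {f Q : R⟦X⟧}
    (hf : (1 + X) * derivative R f = C ν * f) (hQ : padeODE (-ν) m Q = 0) :
    padeODE ν m (f * Q) = 0 := by
  have hf' := congrArg (derivative R) hf
  simp only [padeODE, Derivation.leibniz, map_add, derivative_C, derivative_X, smul_eq_mul,
    Derivation.map_one_eq_zero] at hf' hQ ⊢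
  have hne : (1 + X : R⟦X⟧) ≠ 0 := fun h ↦ by simpa using congrArg constantCoeff h
  apply mul_left_cancel₀ hne
  simp only [map_mul, map_sub, map_add, map_neg, map_one, map_ofNat] at *
  linear_combination (f * (1 + X)) * hQ + X * (1 + X) * Q * hf'
    + (2 * X * (1 + X) * derivative R Q - (2 * C m + (2 * C m + C ν - 1) * X) * Q
      + X * Q * (C ν - 1)) * hf

end ODE

section Pade

variable {K : Type*} [Field K] [CharZero K]

theorem ringChoose_eq_prod (α : K) (j : ℕ) :
    Ring.choose α j = ∏ i ∈ range j, (α - i) / (i + 1) := by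
  rw [Ring.choose_eq_smul, ← Polynomial.aeval_eq_smeval, Polynomial.aeval_def,
    Polynomial.eval₂_eq_eval_map, descPochhammer_map, descPochhammer_eval_eq_prod_range,
    prod_div_distrib, ← prod_range_add_one_eq_factorial, smul_eq_mul, div_eq_inv_mul]
  push_cast
  rfl

theorem add_one_mul_ringChoose_succ (α : K) (j : ℕ) :
    ((j : K) + 1) * Ring.choose α (j + 1) = (α - j) * Ring.choose α j := by
  have hj : (j : K) + 1 ≠ 0 := by exact_mod_cast j.succ_ne_zero
  rw [ringChoose_eq_prod, ringChoose_eq_prod, prod_range_succ]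
  field_simp

theorem add_one_mul_ringChoose_add_one_succ (α : K) (j : ℕ) :
    ((j : K) + 1) * Ring.choose (α + 1) (j + 1) = (α + 1) * Ring.choose α j := by
  rw [Ring.choose_succ_succ]
  linear_combination add_one_mul_ringChoose_succ α j

theorem abs_ringChoose_le_one {ν : ℚ} (hν : |ν| ≤ 1) (j : ℕ) : |Ring.choose ν j| ≤ 1 := by
  rw [ringChoose_eq_prod, abs_prod]
  refine prod_le_one (fun _ _ ↦ abs_nonneg _) fun i _ ↦ ?_
  rw [abs_div, abs_of_pos (by positivity : (0 : ℚ) < i + 1), div_le_one (by positivity)]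
  calc |ν - i| ≤ |ν| + |(i : ℚ)| := abs_sub _ _
    _ ≤ i + 1 := by rw [Nat.abs_cast]; linarith

theorem abs_ringChoose_natCast_add_le {ν : ℚ} (hν : |ν| ≤ 1) {m j : ℕ} (hj : j ≤ m) :
    |Ring.choose (m + ν) j| ≤ (m + 1).choose j := by
  have hm : (m : ℚ) + 1 = ((m + 1 : ℕ) : ℚ) := by push_cast; rfl
  rw [← Ring.choose_natCast, ← hm, ringChoose_eq_prod, ringChoose_eq_prod, abs_prod]
  refine prod_le_prod (fun _ _ ↦ abs_nonneg _) fun i hi ↦ ?_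
  have him : (i : ℚ) + 1 ≤ m := by exact_mod_cast (mem_range.1 hi).trans_le hj
  rw [abs_div, abs_of_pos (by positivity : (0 : ℚ) < i + 1)]
  gcongr
  rw [abs_le] at hν ⊢
  constructor <;> linarith

theorem ringChoose_natCast_add_self_ne_zero {ν : ℚ} (hν : |ν| < 1) (m : ℕ) :
    Ring.choose (m + ν) m ≠ 0 := by
  rw [ringChoose_eq_prod, prod_ne_zero_iff]
  intro i hi
  have him : (i : ℚ) + 1 ≤ m := by exact_mod_cast mem_range.1 hi
  have hnum : (m : ℚ) + ν - i ≠ 0 := by linarith [(abs_lt.1 hν).1]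
  positivity

/-- The coefficients of the diagonal Padé approximants of `(1 + X) ^ ν`: the approximant of order
`m` has numerator `∑ padeCoeff ν m j X ^ j` and denominator `∑ padeCoeff (-ν) m j X ^ j`. The case
distinction only matters for `m = 0`, since `(2 * m - j).choose m` vanishes for `0 < m < j`. -/
noncomputable def padeCoeff (ν : K) (m j : ℕ) : K :=
  if j ≤ m then Ring.choose (m + ν) j * (2 * m - j).choose m else 0

theorem padeCoeff_of_lt (ν : K) {m j : ℕ} (h : m < j) : padeCoeff ν m j = 0 :=
  if_neg h.not_ge

theorem padeCoeff_zero (ν : K) (m : ℕ) : padeCoeff ν m 0 = (2 * m).choose m := by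
  simp [padeCoeff]

theorem padeCoeff_self (ν : K) (m : ℕ) : padeCoeff ν m m = Ring.choose (m + ν) m := by
  simp [padeCoeff, two_mul]

theorem padeCoeff_succ (ν : K) (m j : ℕ) :
    ((j : K) + 1) * (2 * m - j) * padeCoeff ν m (j + 1) =
      (m - j) * (m + ν - j) * padeCoeff ν m j := by
  rcases lt_trichotomy j m with h | rfl | h
  · rw [padeCoeff, padeCoeff, if_pos (by omega), if_pos h.le]
    linear_combination
      (2 * (m : K) - j) * (2 * m - (j + 1)).choose m * add_one_mul_ringChoose_succ (m + ν) j +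
        ((m : K) + ν - j) * Ring.choose (m + ν) j * choose_mul_sub_eq_of_lt (K := K) h
  · simp [padeCoeff_of_lt]
  · simp [padeCoeff_of_lt, h, h.trans (Nat.lt_succ_self _)]

theorem abs_padeCoeff_le {ν : ℚ} (hν : |ν| ≤ 1) (m j : ℕ) : |padeCoeff ν m j| ≤ 2 * 8 ^ m := by
  rcases le_or_gt j m with h | h
  · have hleft : |Ring.choose (m + ν) j| ≤ 2 ^ (m + 1) :=
      (abs_ringChoose_natCast_add_le hν h).trans (by exact_mod_cast Nat.choose_le_two_pow _ _)
    have hright : (((2 * m - j).choose m : ℕ) : ℚ) ≤ 2 ^ (2 * m) := by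
      exact_mod_cast (Nat.choose_le_two_pow _ _).trans
        (Nat.pow_le_pow_right two_pos (Nat.sub_le _ _))
    rw [padeCoeff, if_pos h, abs_mul, Nat.abs_cast]
    calc |Ring.choose (m + ν) j| * ((2 * m - j).choose m : ℕ)
        ≤ 2 ^ (m + 1) * 2 ^ (2 * m) := by gcongr
      _ = 2 * (2 * 2 ^ 2) ^ m := by rw [mul_pow, pow_succ, pow_mul]; ring
      _ = 2 * 8 ^ m := by norm_num
  · simp [padeCoeff_of_lt _ h]

section Series

open PowerSeries

theorem one_add_X_mul_derivative_binomialSeries (ν : K) :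
    (1 + X) * derivative K (binomialSeries K ν) = C ν * binomialSeries K ν := by
  ext j
  rw [add_mul, one_mul, map_add, coeff_C_mul]
  rcases j with _ | j
  · simp [coeff_derivative]
  · have hsucc := add_one_mul_ringChoose_succ ν (j + 1)
    simp only [coeff_succ_X_mul, coeff_derivative, binomialSeries_coeff, smul_eq_mul, mul_one]
    push_cast at hsucc ⊢
    linear_combination hsucc

theorem coeff_binomialSeries_mul_padeCoeff (ν : K) {m j : ℕ} (hj : j ≤ 2 * m) :
    coeff j (binomialSeries K ν * mk (padeCoeff (-ν) m)) = padeCoeff ν m j := by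
  have hQ : padeODE (-ν) m (mk (padeCoeff (-ν) m)) = 0 :=
    (padeODE_eq_zero_iff _ _ _).2 fun j ↦ by simpa only [coeff_mk] using padeCoeff_succ (-ν) m j
  have hrec := (padeODE_eq_zero_iff _ _ _).1
    (padeODE_mul_eq_zero ν m (one_add_X_mul_derivative_binomialSeries ν) hQ)
  induction j with
  | zero => simp [padeCoeff_zero]
  | succ j ih =>
    have hne : ((j : K) + 1) * (2 * m - j) ≠ 0 := by
      refine mul_ne_zero (by exact_mod_cast j.succ_ne_zero) (sub_ne_zero.2 ?_)
      exact_mod_cast (show 2 * m ≠ j by omega)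
    apply mul_left_cancel₀ hne
    rw [hrec j, ih (by omega), padeCoeff_succ]

end Series

section Polynomials

open Polynomial

/-- The numerator of the diagonal Padé approximant of order `m` of `(1 + X) ^ ν`; the denominator
is `padePoly (-ν) m`. -/
noncomputable def padePoly (ν : K) (m : ℕ) : K[X] :=
  ∑ j ∈ range (m + 1), C (padeCoeff ν m j) * X ^ j

@[simp]
theorem coeff_padePoly (ν : K) (m j : ℕ) : (padePoly ν m).coeff j = padeCoeff ν m j := by
  simp only [padePoly, finsetSum_coeff, coeff_C_mul, coeff_X_pow, mul_ite, mul_one, mul_zero,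
    sum_ite_eq, mem_range]
  split_ifs with h
  · rfl
  · exact (padeCoeff_of_lt ν (by omega)).symm

theorem natDegree_padePoly_le (ν : K) (m : ℕ) : (padePoly ν m).natDegree ≤ m :=
  natDegree_le_iff_coeff_eq_zero.2 fun j hj ↦ by simp [padeCoeff_of_lt ν hj]

theorem X_pow_dvd_binomialSeries_mul_padePoly_sub (ν : K) (m : ℕ) :
    (PowerSeries.X : PowerSeries K) ^ (2 * m + 1) ∣
      PowerSeries.binomialSeries K ν * (padePoly (-ν) m : K[X]) - (padePoly ν m : K[X]) := by
  have hmk : ((padePoly (-ν) m : K[X]) : PowerSeries K) = PowerSeries.mk (padeCoeff (-ν) m) := by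
    ext j; simp
  rw [PowerSeries.X_pow_dvd_iff]
  intro j hj
  rw [map_sub, hmk, coeff_binomialSeries_mul_padeCoeff ν (by omega), coeff_coe, coeff_padePoly,
    sub_self]

theorem coeff_padePoly_mul_padePoly_sub (ν : K) (m : ℕ) :
    ((m : K) + 1) * (padePoly ν m * padePoly (-ν) (m + 1)
      - padePoly ν (m + 1) * padePoly (-ν) m).coeff (2 * m + 1) =
    -(2 * ν) * (Ring.choose (m + ν) m * Ring.choose (m + -ν) m) := by
  have hleft := coeff_mul_add_eq_of_natDegree_le (natDegree_padePoly_le ν m)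
    (natDegree_padePoly_le (-ν) (m + 1))
  have hright := coeff_mul_add_eq_of_natDegree_le (natDegree_padePoly_le ν (m + 1))
    (natDegree_padePoly_le (-ν) m)
  have hshift := add_one_mul_ringChoose_add_one_succ (m + ν) m
  have hshift' := add_one_mul_ringChoose_add_one_succ (m + -ν) m
  rw [add_right_comm] at hshift hshift'
  rw [coeff_sub, show 2 * m + 1 = m + (m + 1) by ring, hleft, add_comm m (m + 1), hright]
  simp only [coeff_padePoly, padeCoeff_self]
  push_cast
  linear_combination Ring.choose (m + ν) m * hshift' - Ring.choose (m + -ν) m * hshift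

theorem padePoly_mul_padePoly_sub (ν : K) (m : ℕ) :
    padePoly ν m * padePoly (-ν) (m + 1) - padePoly ν (m + 1) * padePoly (-ν) m =
      C (-(2 * ν) / (m + 1) * (Ring.choose (m + ν) m * Ring.choose (m + -ν) m)) *
        X ^ (2 * m + 1) := by
  set D := padePoly ν m * padePoly (-ν) (m + 1) - padePoly ν (m + 1) * padePoly (-ν) m with hD
  have hdeg : D.natDegree ≤ 2 * m + 1 := by
    refine (natDegree_sub_le _ _).trans (max_le ?_ ?_)
    · exact (natDegree_mul_le_of_le (natDegree_padePoly_le _ _) (natDegree_padePoly_le _ _)).trans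
        (by omega)
    · exact (natDegree_mul_le_of_le (natDegree_padePoly_le _ _) (natDegree_padePoly_le _ _)).trans
        (by omega)
  have hdvd : (PowerSeries.X : PowerSeries K) ^ (2 * m + 1) ∣ (D : PowerSeries K) := by
    have hsplit : (D : PowerSeries K) =
        (PowerSeries.binomialSeries K ν * (padePoly (-ν) (m + 1) : K[X])
          - (padePoly ν (m + 1) : K[X])) * (padePoly (-ν) m : K[X])
        - (PowerSeries.binomialSeries K ν * (padePoly (-ν) m : K[X]) - (padePoly ν m : K[X]))
          * (padePoly (-ν) (m + 1) : K[X]) := by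
      simp only [hD, Polynomial.coe_sub, Polynomial.coe_mul]
      ring
    rw [hsplit]
    exact dvd_sub (((pow_dvd_pow _ (by omega)).trans
      (X_pow_dvd_binomialSeries_mul_padePoly_sub ν (m + 1))).mul_right _)
      ((X_pow_dvd_binomialSeries_mul_padePoly_sub ν m).mul_right _)
  have hm : (m : K) + 1 ≠ 0 := by exact_mod_cast m.succ_ne_zero
  rw [eq_C_coeff_mul_X_pow hdeg hdvd, div_mul_eq_mul_div,
    ← coeff_padePoly_mul_padePoly_sub, mul_div_cancel_left₀ _ hm]

end Polynomials

end Pade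

section PadeIntegrality

theorem factorial_dvd_pow_mul_prod_range_sub {p : ℕ} (hp : p.Prime) (a : ℤ) (j : ℕ) :
    (j.factorial : ℤ) ∣ p ^ j * ∏ i ∈ range j, (a - p * i) := by
  have := Fact.mk hp
  obtain ⟨s, n, hpn, hn⟩ :=
    Nat.exists_eq_pow_mul_and_not_dvd j.factorial_ne_zero p hp.ne_one
  have hs : s ≤ j := calc
    s ≤ padicValNat p j.factorial :=
      (padicValNat_dvd_iff_le j.factorial_ne_zero).1 ⟨n, hn⟩
    _ ≤ (p - 1) * padicValNat p j.factorial :=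
      Nat.le_mul_of_pos_left _ (Nat.sub_pos_of_lt hp.one_lt)
    _ ≤ j := by rw [sub_one_mul_padicValNat_factorial]; exact Nat.sub_le _ _
  have hcop : IsCoprime (p : ℤ) n := Nat.isCoprime_iff_coprime.2 (hp.coprime_iff_not_dvd.2 hpn)
  obtain ⟨u, v, huv⟩ := hcop
  -- As `u` inverts `p` modulo `n`, the product is `p ^ j` times a falling factorial of `u * a`.
  have hmod : ∏ i ∈ range j, (a - p * i) ≡ ∏ i ∈ range j, (p * (u * a - i)) [ZMOD n] :=
    Int.ModEq.prod fun i _ ↦ Int.modEq_iff_dvd.2 ⟨-v * a, by linear_combination a * huv⟩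
  have hfact : (j.factorial : ℤ) ∣ ∏ i ∈ range j, (u * a - i) := by
    have hchoose := Ring.descPochhammer_eq_factorial_smul_choose (u * a) j
    rw [← Polynomial.eval_eq_smeval, descPochhammer_eval_eq_prod_range] at hchoose
    exact ⟨_, hchoose.trans (nsmul_eq_mul _ _)⟩
  rw [hn]
  push_cast
  refine mul_dvd_mul (pow_dvd_pow _ hs) ((hmod.dvd_iff).2 ?_)
  rw [prod_mul_distrib]
  exact ((Dvd.intro_left ((p : ℤ) ^ s) (by exact_mod_cast hn.symm)).trans hfact).mul_left _

theorem exists_intCast_eq_pow_mul_ringChoose_div {p : ℕ} (hp : p.Prime) (a : ℤ) (j : ℕ) :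
    ∃ w : ℤ, (w : ℚ) = (p ^ 2) ^ j * Ring.choose ((a : ℚ) / p) j := by
  obtain ⟨w, hw⟩ := factorial_dvd_pow_mul_prod_range_sub hp a j
  have hp0 : (p : ℚ) ≠ 0 := by exact_mod_cast hp.ne_zero
  have hj0 : (j.factorial : ℚ) ≠ 0 := by exact_mod_cast j.factorial_ne_zero
  have hprod : Ring.choose ((a : ℚ) / p) j * (p ^ j * j.factorial) =
      ∏ i ∈ range j, ((a : ℚ) - p * i) := by
    rw [ringChoose_eq_prod, ← prod_range_add_one_eq_factorial]
    push_cast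
    rw [← card_range j, ← prod_const, card_range, ← prod_mul_distrib, ← prod_mul_distrib]
    exact prod_congr rfl fun i _ ↦ by field_simp
  have hwq := congrArg (Int.cast : ℤ → ℚ) hw
  push_cast at hwq
  refine ⟨w, mul_left_cancel₀ hj0 ?_⟩
  rw [← hwq, ← hprod]
  ring

theorem exists_intCast_eq_pow_mul_padeCoeff (a : ℤ) (m j : ℕ) :
    ∃ w : ℤ, (w : ℚ) = 9 ^ m * padeCoeff ((a : ℚ) / 3) m j := by
  rcases le_or_gt j m with h | h
  · obtain ⟨w, hw⟩ := exists_intCast_eq_pow_mul_ringChoose_div Nat.prime_three (3 * m + a) j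
    refine ⟨9 ^ (m - j) * w * (2 * m - j).choose m, ?_⟩
    have harg : ((3 * m + a : ℤ) : ℚ) / (3 : ℕ) = m + (a : ℚ) / 3 := by
      push_cast
      field_simp
    have hpow : (9 : ℚ) ^ m = 9 ^ (m - j) * (((3 : ℕ) : ℚ) ^ 2) ^ j := by
      norm_num [← pow_add, h]
    rw [padeCoeff, if_pos h, hpow, ← harg]
    push_cast at hw ⊢
    rw [hw]
    ring
  · exact ⟨0, by simp [padeCoeff_of_lt _ h]⟩

open Polynomial

/-- The Padé numerator `padePoly (a / 3) m`, scaled by `9 ^ m` to make its coefficients integral. -/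
noncomputable def intPadePoly (a : ℤ) (m : ℕ) : ℤ[X] :=
  ∑ j ∈ range (m + 1), C (9 ^ m * padeCoeff ((a : ℚ) / 3) m j).num * X ^ j

theorem map_intPadePoly (a : ℤ) (m : ℕ) :
    (intPadePoly a m).map (Int.castRingHom ℚ) = C (9 ^ m) * padePoly ((a : ℚ) / 3) m := by
  have hnum (j : ℕ) : ((9 ^ m * padeCoeff ((a : ℚ) / 3) m j).num : ℚ) =
      9 ^ m * padeCoeff ((a : ℚ) / 3) m j := by
    obtain ⟨w, hw⟩ := exists_intCast_eq_pow_mul_padeCoeff a m j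
    rw [← hw, Rat.num_intCast]
  rw [intPadePoly, padePoly, mul_sum, Polynomial.map_sum]
  refine sum_congr rfl fun j _ ↦ ?_
  rw [Polynomial.map_mul, map_C, eq_intCast, hnum, Polynomial.map_pow, map_X, C_mul, mul_assoc]

theorem natDegree_intPadePoly_le (a : ℤ) (m : ℕ) : (intPadePoly a m).natDegree ≤ m := by
  rw [← natDegree_map_eq_of_injective (RingHom.injective_int (Int.castRingHom ℚ)), map_intPadePoly]
  exact (natDegree_C_mul_le _ _).trans (natDegree_padePoly_le _ _)

variable {A : Type*} [Field A] [Algebra ℚ A]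

theorem aeval_intPadePoly (a : ℤ) (m : ℕ) (z : A) :
    aeval z (intPadePoly a m) = 9 ^ m * aeval z (padePoly ((a : ℚ) / 3) m) := by
  rw [← aeval_map_algebraMap ℚ, algebraMap_int_eq, map_intPadePoly, map_mul, aeval_C, map_pow,
    map_ofNat]

theorem aeval_intPadePoly_mul_sub_ne_zero (m : ℕ) {z : A} (hz : z ≠ 0) :
    aeval z (intPadePoly 1 m) * aeval z (intPadePoly (-1) (m + 1)) -
      aeval z (intPadePoly 1 (m + 1)) * aeval z (intPadePoly (-1) m) ≠ 0 := by
  have hκ : -(2 * (1 / 3 : ℚ)) / (m + 1) *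
      (Ring.choose (m + 1 / 3 : ℚ) m * Ring.choose (m + -(1 / 3) : ℚ) m) ≠ 0 :=
    mul_ne_zero (div_ne_zero (by norm_num) (by positivity)) (mul_ne_zero
      (ringChoose_natCast_add_self_ne_zero (by norm_num [abs_of_pos]) m)
      (ringChoose_natCast_add_self_ne_zero (by norm_num [abs_of_pos]) m))
  have hdet := congrArg (aeval z) (padePoly_mul_padePoly_sub (1 / 3 : ℚ) m)
  rw [map_sub, map_mul, map_mul, map_mul (aeval z) (C _), aeval_C, map_pow, aeval_X] at hdet
  simp only [aeval_intPadePoly, Int.cast_one, Int.cast_neg, neg_div]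
  have hfactor (p q r s : A) : 9 ^ m * p * (9 ^ (m + 1) * q) - 9 ^ (m + 1) * r * (9 ^ m * s) =
      9 ^ m * 9 ^ (m + 1) * (p * q - r * s) := by ring
  have := algebraRat.charZero A
  rw [hfactor, hdet]
  have hnine : (9 : A) ≠ 0 := by norm_num
  exact mul_ne_zero (by positivity) (mul_ne_zero ((_root_.map_ne_zero _).2 hκ) (pow_ne_zero _ hz))

end PadeIntegrality

section PowerSum

open PowerSeries Polynomial

/-- The rational power series `F` converges to `w` at the complex number `z`. -/
def HasPowerSum (F : ℚ⟦X⟧) (z w : ℂ) : Prop :=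
  HasSum (fun j ↦ ((coeff j F : ℚ) : ℂ) * z ^ j) w

variable {F G : ℚ⟦X⟧} {z v w : ℂ}

theorem HasPowerSum.sub (hF : HasPowerSum F z v) (hG : HasPowerSum G z w) :
    HasPowerSum (F - G) z (v - w) := by
  simpa [HasPowerSum, sub_mul] using HasSum.sub hF hG

theorem HasPowerSum.mul (hF : HasPowerSum F z v) (hG : HasPowerSum G z w) :
    HasPowerSum (F * G) z (v * w) := by
  have hFn := summable_norm_iff.2 hF.summable
  have hGn := summable_norm_iff.2 hG.summable
  have hcoeff (n : ℕ) : ((coeff n (F * G) : ℚ) : ℂ) * z ^ n = ∑ ij ∈ antidiagonal n,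
      ((coeff ij.1 F : ℚ) : ℂ) * z ^ ij.1 * (((coeff ij.2 G : ℚ) : ℂ) * z ^ ij.2) := by
    rw [PowerSeries.coeff_mul, Rat.cast_sum, sum_mul]
    refine sum_congr rfl fun ij hij ↦ ?_
    rw [← mem_antidiagonal.1 hij, pow_add]
    push_cast
    ring
  rw [HasPowerSum, funext hcoeff, ← HasSum.tsum_eq hF, ← HasSum.tsum_eq hG,
    tsum_mul_tsum_eq_tsum_sum_antidiagonal_of_summable_norm hFn hGn]
  exact (summable_norm_sum_mul_antidiagonal_of_summable_norm hFn hGn).of_norm.hasSum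

theorem hasPowerSum_coe (p : ℚ[X]) (z : ℂ) : HasPowerSum p z (aeval z p) := by
  rw [aeval_eq_sum_range]
  have hsum : ∑ j ∈ range (p.natDegree + 1), p.coeff j • z ^ j =
      ∑ j ∈ range (p.natDegree + 1), ((PowerSeries.coeff j (p : ℚ⟦X⟧) : ℚ) : ℂ) * z ^ j :=
    sum_congr rfl fun j _ ↦ by simp [Rat.smul_def]
  rw [hsum]
  refine hasSum_sum_of_ne_finset_zero fun j hj ↦ ?_
  rw [Polynomial.coeff_coe,
    coeff_eq_zero_of_natDegree_lt (by simpa [Nat.lt_succ_iff] using hj)]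
  simp

theorem hasPowerSum_binomialSeries (ν : ℚ) (hz : ‖z‖ < 1) :
    HasPowerSum (PowerSeries.binomialSeries ℚ ν) z ((1 + z) ^ (ν : ℂ)) := by
  have hball : z ∈ Metric.eball (0 : ℂ) 1 := by
    simpa [← ofReal_norm] using hz
  have hsum := (Complex.one_add_cpow_hasFPowerSeriesOnBall_zero (a := (ν : ℂ))).hasSum hball
  have hcast (j : ℕ) : ((Ring.choose ν j : ℚ) : ℂ) = Ring.choose (ν : ℂ) j :=
    Ring.map_choose (Rat.castHom ℂ) ν j
  simpa [HasPowerSum, hcast, _root_.binomialSeries, mul_comm] using hsum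

theorem HasPowerSum.norm_le {M : ℝ} {n : ℕ} (hF : HasPowerSum F z w)
    (hM : ∀ j, |((coeff j F : ℚ) : ℝ)| ≤ M) (hdvd : (X : ℚ⟦X⟧) ^ n ∣ F) (hz : ‖z‖ ≤ 1 / 2) :
    ‖w‖ ≤ 2 * M * ‖z‖ ^ n := by
  have hshift : HasSum (fun j ↦ ((coeff (j + n) F : ℚ) : ℂ) * z ^ (j + n)) w := by
    have hzero : ∑ j ∈ range n, ((coeff j F : ℚ) : ℂ) * z ^ j = 0 :=
      sum_eq_zero fun j hj ↦ by simp [X_pow_dvd_iff.1 hdvd j (mem_range.1 hj)]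
    simpa [hzero] using (hasSum_nat_add_iff' n).2 hF
  have hgeom : HasSum (fun j : ℕ ↦ M * ‖z‖ ^ n * (1 / 2 : ℝ) ^ j) (M * ‖z‖ ^ n * 2) :=
    hasSum_geometric_two.mul_left _
  have hM0 : 0 ≤ M := (abs_nonneg _).trans (hM 0)
  have hterm (j : ℕ) : ‖((coeff (j + n) F : ℚ) : ℂ) * z ^ (j + n)‖ ≤ M * ‖z‖ ^ n * (1 / 2) ^ j := by
    rw [norm_mul, norm_pow, pow_add, ← Complex.ofReal_ratCast, Complex.norm_real, mul_comm (_ ^ j),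
      ← mul_assoc]
    gcongr
    exact hM _
  rw [← hshift.tsum_eq]
  exact (tsum_of_norm_bounded hgeom hterm).trans_eq (by ring)

theorem abs_coeff_mul_coe_le {p : ℚ[X]} {m : ℕ} {M : ℚ} (hF : ∀ j, |coeff j F| ≤ 1)
    (hdeg : p.natDegree ≤ m) (hp : ∀ j, |p.coeff j| ≤ M) (n : ℕ) :
    |coeff n (F * (p : ℚ⟦X⟧))| ≤ (m + 1) * M := by
  have hp0 (i : ℕ) (hi : i ∉ range (m + 1)) : p.coeff i = 0 :=
    coeff_eq_zero_of_natDegree_lt (hdeg.trans_lt (by simpa [Nat.lt_succ_iff] using hi))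
  rw [mul_comm, PowerSeries.coeff_mul, Nat.sum_antidiagonal_eq_sum_range_succ
    (fun i k ↦ coeff i (p : ℚ⟦X⟧) * coeff k F)]
  calc |∑ i ∈ range n.succ, coeff i (p : ℚ⟦X⟧) * coeff (n - i) F|
      ≤ ∑ i ∈ range n.succ, |p.coeff i| := by
        refine (abs_sum_le_sum_abs _ _).trans (sum_le_sum fun i _ ↦ ?_)
        rw [abs_mul, Polynomial.coeff_coe]
        exact mul_le_of_le_one_right (abs_nonneg _) (hF _)
    _ = ∑ i ∈ range n.succ with i ∈ range (m + 1), |p.coeff i| :=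
        (sum_filter_of_ne fun i _ hi ↦ not_imp_comm.1 (hp0 i) (abs_ne_zero.1 hi)).symm
    _ ≤ ∑ i ∈ range (m + 1), |p.coeff i| :=
        sum_le_sum_of_subset_of_nonneg (fun i hi ↦ (mem_filter.1 hi).2) fun _ _ _ ↦ abs_nonneg _
    _ ≤ (m + 1) * M := (sum_le_card_nsmul _ _ M fun i _ ↦ hp i).trans_eq (by simp)

end PowerSum

section PadeBounds

open PowerSeries Polynomial

variable {z : ℂ}

theorem norm_aeval_padePoly_le {ν : ℚ} (hν : |ν| ≤ 1) (m : ℕ) (hz : ‖z‖ ≤ 1 / 2) :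
    ‖aeval z (padePoly ν m)‖ ≤ 4 * 8 ^ m := by
  have hcoeff (j : ℕ) : |((coeff j (padePoly ν m : ℚ⟦X⟧) : ℚ) : ℝ)| ≤ 2 * 8 ^ m := by
    rw [Polynomial.coeff_coe, coeff_padePoly]
    exact_mod_cast abs_padeCoeff_le hν m j
  calc ‖aeval z (padePoly ν m)‖ ≤ 2 * (2 * 8 ^ m) * ‖z‖ ^ 0 :=
        (hasPowerSum_coe _ z).norm_le hcoeff (by simp) hz
    _ = 4 * 8 ^ m := by ring

theorem abs_coeff_binomialSeries_mul_padePoly_sub_le {ν : ℚ} (hν : |ν| ≤ 1) (m j : ℕ) :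
    |coeff j (PowerSeries.binomialSeries ℚ ν * (padePoly (-ν) m : ℚ⟦X⟧) - (padePoly ν m : ℚ⟦X⟧))| ≤
      4 * 16 ^ m := by
  have hmul := abs_coeff_mul_coe_le (F := PowerSeries.binomialSeries ℚ ν)
    (fun j ↦ by simpa using abs_ringChoose_le_one hν j) (natDegree_padePoly_le (-ν) m)
    (fun j ↦ by simpa using abs_padeCoeff_le (by rwa [abs_neg]) m j) j
  have hnum : |coeff j (padePoly ν m : ℚ⟦X⟧)| ≤ 2 * 8 ^ m := by
    simpa using abs_padeCoeff_le hν m j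
  have htwo : (m : ℚ) + 2 ≤ 2 * 2 ^ m := by
    have hm : m + 1 ≤ 2 ^ m := Nat.lt_two_pow_self
    exact_mod_cast (by omega : m + 2 ≤ 2 * 2 ^ m)
  calc _ ≤ (m + 1) * (2 * 8 ^ m : ℚ) + 2 * 8 ^ m := by
        rw [map_sub]
        exact (abs_sub _ _).trans (add_le_add hmul hnum)
    _ = (m + 2) * (2 * 8 ^ m : ℚ) := by ring
    _ ≤ 2 * 2 ^ m * (2 * 8 ^ m) := by gcongr
    _ = 4 * (2 * 8) ^ m := by rw [mul_pow]; ring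
    _ = 4 * 16 ^ m := by norm_num

theorem norm_one_add_cpow_mul_padePoly_sub_le {ν : ℚ} (hν : |ν| ≤ 1) (m : ℕ) (hz : ‖z‖ ≤ 1 / 2) :
    ‖(1 + z) ^ (ν : ℂ) * aeval z (padePoly (-ν) m) - aeval z (padePoly ν m)‖ ≤
      8 * 16 ^ m * ‖z‖ ^ (2 * m + 1) := by
  have hsum := ((hasPowerSum_binomialSeries ν (hz.trans_lt one_half_lt_one)).mul
    (hasPowerSum_coe (padePoly (-ν) m) z)).sub (hasPowerSum_coe (padePoly ν m) z)
  have hcoeff (j : ℕ) := abs_coeff_binomialSeries_mul_padePoly_sub_le hν m j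
  refine (hsum.norm_le (M := 4 * 16 ^ m) (fun j ↦ by exact_mod_cast hcoeff j)
    (X_pow_dvd_binomialSeries_mul_padePoly_sub ν m) hz).trans_eq (by ring)

theorem norm_one_add_cpow_sub_one_le {ν : ℚ} (hν : |ν| ≤ 1) (hz : ‖z‖ ≤ 1 / 2) :
    ‖(1 + z) ^ (ν : ℂ) - 1‖ ≤ 2 * ‖z‖ := by
  have hsum := (hasPowerSum_binomialSeries ν (hz.trans_lt one_half_lt_one)).sub
    (hasPowerSum_coe 1 z)
  have hdvd : (X : ℚ⟦X⟧) ^ 1 ∣ PowerSeries.binomialSeries ℚ ν - ((1 : ℚ[X]) : ℚ⟦X⟧) := by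
    simp [PowerSeries.X_dvd_iff]
  have hcoeff (j : ℕ) :
      |((coeff j (PowerSeries.binomialSeries ℚ ν - ((1 : ℚ[X]) : ℚ⟦X⟧)) : ℚ) : ℝ)| ≤ 1 := by
    rcases j with _ | j
    · simp
    · simpa [PowerSeries.coeff_one] using mod_cast abs_ringChoose_le_one hν (j + 1)
  simpa using hsum.norm_le hcoeff hdvd hz

theorem norm_aeval_intPadePoly_one_le (m : ℕ) (hz : ‖z‖ ≤ 1 / 2) :
    ‖aeval z (intPadePoly 1 m)‖ ≤ 4 * 72 ^ m := by
  have hnorm := norm_aeval_padePoly_le (ν := (1 : ℤ) / 3) (by norm_num [abs_of_pos]) m hz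
  calc ‖aeval z (intPadePoly 1 m)‖ ≤ 9 ^ m * (4 * 8 ^ m) := by
        rw [aeval_intPadePoly, norm_mul, norm_pow, RCLike.norm_ofNat]
        gcongr
    _ = 4 * (9 * 8) ^ m := by rw [mul_pow]; ring
    _ = 4 * 72 ^ m := by norm_num

theorem norm_one_add_cpow_mul_intPadePoly_sub_le (m : ℕ) (hz : ‖z‖ ≤ 1 / 2) :
    ‖(1 + z) ^ (3⁻¹ : ℂ) * aeval z (intPadePoly (-1) m) - aeval z (intPadePoly 1 m)‖ ≤
      8 * 144 ^ m * ‖z‖ ^ (2 * m + 1) := by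
  have hnorm := norm_one_add_cpow_mul_padePoly_sub_le (ν := 3⁻¹) (by norm_num [abs_of_pos]) m hz
  push_cast at hnorm
  simp only [aeval_intPadePoly, Int.cast_one, Int.cast_neg, neg_div, one_div]
  rw [mul_left_comm, ← mul_sub, norm_mul, norm_pow, RCLike.norm_ofNat]
  calc _ ≤ 9 ^ m * (8 * 16 ^ m * ‖z‖ ^ (2 * m + 1)) := by gcongr
    _ = 8 * (9 * 16) ^ m * ‖z‖ ^ (2 * m + 1) := by rw [mul_pow]; ring
    _ = 8 * 144 ^ m * ‖z‖ ^ (2 * m + 1) := by norm_num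

end PadeBounds

/-! ### Denominators of products of conjugates -/

section ProdDenom

variable {ι A : Type*} [CommRing A]

/-- `D` is a common denominator of all the products `∏ σ ∈ I, x σ`. When the `x σ` are the roots of
an integral polynomial, its leading coefficient has this property. -/
def IsProdDenom (D : ℕ) (x : ι → A) : Prop :=
  ∀ I : Finset ι, IsIntegral ℤ ((D : A) * ∏ σ ∈ I, x σ)

variable [Fintype ι] {D E : ℕ} {x y : ι → A}

theorem IsProdDenom.isIntegral_pow_mul_prod_pow (hx : IsProdDenom D x) {N : ℕ} {j : ι → ℕ}
    (hj : ∀ σ, j σ ≤ N) : IsIntegral ℤ ((D : A) ^ N * ∏ σ, x σ ^ j σ) := by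
  have layers : (D : A) ^ N * ∏ σ, x σ ^ j σ =
      ∏ i ∈ range N, ((D : A) * ∏ σ ∈ univ.filter (fun σ ↦ i < j σ), x σ) := by
    have (σ : ι) : (range N).filter (fun i ↦ i < j σ) = range (j σ) := by
      ext i
      have := hj σ
      simp only [mem_filter, mem_range]
      omega
    simp_rw [prod_mul_distrib, prod_const, card_range, prod_filter]
    rw [prod_comm]
    simp_rw [← prod_filter, prod_const, this, card_range]
  rw [layers]
  exact IsIntegral.prod _ fun i _ ↦ hx _

open Polynomial

theorem IsProdDenom.isIntegral_mul_prod_aeval_add (hx : IsProdDenom D x) (hy : IsProdDenom E y)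
    {N : ℕ} {p q : (integralClosure ℤ A)[X]} (hp : p.natDegree ≤ N) (hq : q.natDegree ≤ N) :
    IsIntegral ℤ ((D : A) ^ N * E * ∏ σ, (aeval (x σ) p + y σ * aeval (x σ) q)) := by
  classical
  let a : ℕ × ℕ → integralClosure ℤ A := fun i ↦ if i.2 = 0 then p.coeff i.1 else q.coeff i.1
  have expansion (σ : ι) : aeval (x σ) p + y σ * aeval (x σ) q =
      ∑ i ∈ range (N + 1) ×ˢ range 2, (a i : A) * (x σ ^ i.1 * y σ ^ i.2) := by
    rw [sum_product_right, sum_range_succ, sum_range_one,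
      aeval_eq_sum_range' (Nat.lt_succ_of_le hp), aeval_eq_sum_range' (Nat.lt_succ_of_le hq),
      mul_sum]
    congr 1 <;> refine sum_congr rfl fun i _ ↦ ?_
    · simp [a, Algebra.smul_def]
    · simp only [a, one_ne_zero, if_false, Subalgebra.smul_def, smul_eq_mul, pow_one]
      ring
  simp_rw [expansion]
  rw [prod_univ_sum, mul_sum]
  refine IsIntegral.sum _ fun f hf ↦ ?_
  have hf (σ : ι) : (f σ).1 ≤ N ∧ (f σ).2 ≤ 1 := by
    simpa [Nat.lt_succ_iff] using Fintype.mem_piFinset.1 hf σ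
  have monomials := (hx.isIntegral_pow_mul_prod_pow fun σ ↦ (hf σ).1).mul
    (hy.isIntegral_pow_mul_prod_pow fun σ ↦ (hf σ).2)
  have coefficients : IsIntegral ℤ (∏ σ, (a (f σ) : A)) := IsIntegral.prod _ fun σ _ ↦ (a (f σ)).2
  convert coefficients.mul monomials using 1
  rw [prod_mul_distrib, prod_mul_distrib]
  ring

end ProdDenom

theorem one_le_abs_of_isIntegral {q : ℚ} (hq : q ≠ 0) (h : IsIntegral ℤ q) : 1 ≤ |q| := by
  obtain ⟨z, rfl⟩ := IsIntegrallyClosed.isIntegral_iff.1 h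
  rw [eq_intCast] at hq ⊢
  exact_mod_cast Int.one_le_abs (Int.cast_ne_zero.1 hq)

theorem one_le_mul_prod_norm_of_isIntegral {F : Type*} [Field F] [Algebra ℚ F]
    [FiniteDimensional ℚ F] {D : ℕ} {θ : F} (hD : 0 < D) (hθ : θ ≠ 0)
    (h : IsIntegral ℤ ((D : ℂ) * ∏ σ : F →ₐ[ℚ] ℂ, σ θ)) :
    (1 : ℝ) ≤ D * ∏ σ : F →ₐ[ℚ] ℂ, ‖σ θ‖ := by
  have norm_eq := Algebra.norm_eq_prod_embeddings ℚ ℂ θ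
  have abs_norm : ∏ σ : F →ₐ[ℚ] ℂ, ‖σ θ‖ = |((Algebra.norm ℚ θ : ℚ) : ℝ)| := by
    rw [← norm_prod, ← norm_eq, eq_ratCast, ← Complex.ofReal_ratCast, Complex.norm_real,
      Real.norm_eq_abs]
  have integral : IsIntegral ℤ ((D : ℚ) * Algebra.norm ℚ θ) := by
    refine (isIntegral_algebraMap_iff (algebraMap ℚ ℂ).injective).1 ?_
    rwa [map_mul, map_natCast, norm_eq]
  have := one_le_abs_of_isIntegral
    (mul_ne_zero (Nat.cast_ne_zero.2 hD.ne') (Algebra.norm_ne_zero_iff.2 hθ)) integral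
  rw [abs_norm]
  rw [abs_mul, Nat.abs_cast] at this
  exact_mod_cast this

/-! ### The equation of the ratio -/

section RatioRoot

/-- The equation satisfied by `t = Z₁ / Z₂` once `Z₃` is eliminated from the system with exponents
`a₁ = k + b` and `a₂ = b`. -/
def IsRatioRoot {R : Type*} [CommRing R] (k b : ℕ) (t : R) : Prop :=
  3 ^ k * t ^ 3 + 1 = 9 ^ b * (3 ^ k * t + 1) ^ 3

theorem IsRatioRoot.map {R S : Type*} [CommRing R] [CommRing S] {k b : ℕ} {t : R}
    (h : IsRatioRoot k b t) (f : R →+* S) : IsRatioRoot k b (f t) := by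
  simpa only [IsRatioRoot, map_add, map_mul, map_pow, map_ofNat, map_one] using congrArg f h

theorem IsRatioRoot.of_map {R S : Type*} [CommRing R] [CommRing S] {k b : ℕ} {t : R} {f : R →+* S}
    (h : IsRatioRoot k b (f t)) (hf : Function.Injective f) : IsRatioRoot k b t :=
  hf (by simpa only [IsRatioRoot, map_add, map_mul, map_pow, map_ofNat, map_one] using h)

theorem IsRatioRoot.ne_zero {R : Type*} [CommRing R] [CharZero R] {k b : ℕ} {t : R}
    (h : IsRatioRoot k b t) (hb : b ≠ 0) : t ≠ 0 := by
  rintro rfl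
  have : (1 : R) = 9 ^ b := by simpa [IsRatioRoot] using h
  exact (Nat.one_lt_pow hb (by norm_num : 1 < 9)).ne (by exact_mod_cast this)

theorem IsRatioRoot.three_pow_mul_add_one_ne_zero {R : Type*} [CommRing R] [CharZero R] {k b : ℕ}
    {t : R} (h : IsRatioRoot k b t) (hk : k ≠ 0) : 3 ^ k * t + 1 ≠ 0 := by
  intro h0
  have h : 3 ^ k * t ^ 3 + 1 = 9 ^ b * (3 ^ k * t + 1) ^ 3 := h
  have sq_eq : t ^ 2 = 1 := by
    linear_combination (t ^ 2 - 9 ^ b * (3 ^ k * t + 1) ^ 2) * h0 - h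
  have : (9 : R) ^ k = 1 := by
    rw [show (9 : R) = 3 ^ 2 by norm_num, ← pow_mul, mul_comm, pow_mul]
    linear_combination (3 ^ k * t - 1) * h0 - 3 ^ k * 3 ^ k * sq_eq
  exact (Nat.one_lt_pow hk (by norm_num : 1 < 9)).ne' (by exact_mod_cast this)

variable {k b : ℕ} {x : ℂ}

theorem IsRatioRoot.norm_three_pow_mul_add_one_le (h : IsRatioRoot k b x) (hb : b ≠ 0) :
    ‖3 ^ k * x + 1‖ ≤ 1 := by
  have cube_le : ‖(3 : ℂ) ^ k * x ^ 3‖ ≤ (‖3 ^ k * x + 1‖ + 1) ^ 3 := by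
    calc ‖(3 : ℂ) ^ k * x ^ 3‖ ≤ 9 ^ k * ‖(3 : ℂ) ^ k * x ^ 3‖ :=
          le_mul_of_one_le_left (norm_nonneg _) (one_le_pow₀ (by norm_num))
      _ = ‖(3 ^ k * x + 1) - 1‖ ^ 3 := by
          have : (9 : ℝ) ^ k = (3 ^ k) ^ 2 := by rw [← pow_mul, mul_comm, pow_mul]; norm_num
          rw [add_sub_cancel_right, this]
          simp only [norm_mul, norm_pow, Complex.norm_ofNat]
          ring
      _ ≤ (‖3 ^ k * x + 1‖ + 1) ^ 3 := by
          gcongr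
          simpa using norm_sub_le (3 ^ k * x + 1) 1
  have nine_le : 9 * ‖3 ^ k * x + 1‖ ^ 3 ≤ ‖(3 : ℂ) ^ k * x ^ 3‖ + 1 := by
    calc 9 * ‖3 ^ k * x + 1‖ ^ 3 ≤ 9 ^ b * ‖3 ^ k * x + 1‖ ^ 3 := by
          gcongr
          exact le_self_pow₀ (by norm_num) hb
      _ = ‖(3 : ℂ) ^ k * x ^ 3 + 1‖ := by
          rw [show (3 : ℂ) ^ k * x ^ 3 + 1 = _ from h]
          simp only [norm_mul, norm_pow, Complex.norm_ofNat]
      _ ≤ ‖(3 : ℂ) ^ k * x ^ 3‖ + 1 := (norm_add_le _ _).trans_eq (by rw [norm_one])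
  by_contra! one_lt
  nlinarith [mul_pos (sub_pos.2 one_lt) (sub_pos.2 one_lt), pow_pos (sub_pos.2 one_lt) 3]

theorem IsRatioRoot.norm_mul_nine_pow_le (h : IsRatioRoot k b x) (hb : b ≠ 0) :
    ‖(3 : ℂ) ^ k * x ^ 3‖ * 9 ^ k ≤ 8 := by
  have two_bound : ‖3 ^ k * x‖ ≤ 2 := by
    have := norm_sub_le (3 ^ k * x + 1) 1
    rw [add_sub_cancel_right, norm_one] at this
    linarith [h.norm_three_pow_mul_add_one_le hb]
  calc ‖(3 : ℂ) ^ k * x ^ 3‖ * 9 ^ k = ‖3 ^ k * x‖ ^ 3 := by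
        have : (9 : ℝ) ^ k = (3 ^ k) ^ 2 := by rw [← pow_mul, mul_comm, pow_mul]; norm_num
        rw [this]
        simp only [norm_mul, norm_pow, Complex.norm_ofNat]
        ring
    _ ≤ 2 ^ 3 := by gcongr
    _ = 8 := by norm_num

theorem IsRatioRoot.norm_le_half (h : IsRatioRoot k b x) (hb : b ≠ 0) (hk : 2 ≤ k) :
    ‖(3 : ℂ) ^ k * x ^ 3‖ ≤ 1 / 2 := by
  have : (9 : ℝ) ^ 2 ≤ 9 ^ k := pow_le_pow_right₀ (by norm_num) hk
  nlinarith [h.norm_mul_nine_pow_le hb, norm_nonneg ((3 : ℂ) ^ k * x ^ 3)]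

/-- The number `ξ` with `9 ^ ⌊b/3⌋ (3 ^ k x + 1) = ξ (1 + 3 ^ k x³) ^ (1/3)`. It takes finitely many
values on the solutions, since `9 ^ (b mod 3) ξ ³ = 1`. -/
noncomputable def cubeRootFactor (k b : ℕ) (x : ℂ) : ℂ :=
  9 ^ (b / 3) * (3 ^ k * x + 1) / (1 + 3 ^ k * x ^ 3) ^ (3⁻¹ : ℂ)

theorem IsRatioRoot.one_add_cpow_ne_zero (h : IsRatioRoot k b x) (hb : b ≠ 0) (hk : 2 ≤ k) :
    (1 + 3 ^ k * x ^ 3) ^ (3⁻¹ : ℂ) ≠ 0 := by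
  refine (Complex.cpow_ne_zero_iff_of_exponent_ne_zero (by norm_num)).2 fun h0 ↦ ?_
  have := h.norm_le_half hb hk
  rw [eq_neg_of_add_eq_zero_right h0, norm_neg, norm_one] at this
  norm_num at this

theorem IsRatioRoot.cubeRootFactor_mul (h : IsRatioRoot k b x) (hb : b ≠ 0) (hk : 2 ≤ k) :
    cubeRootFactor k b x * (1 + 3 ^ k * x ^ 3) ^ (3⁻¹ : ℂ) = 9 ^ (b / 3) * (3 ^ k * x + 1) :=
  div_mul_cancel₀ _ (h.one_add_cpow_ne_zero hb hk)

theorem IsRatioRoot.nine_pow_mul_cubeRootFactor_pow (h : IsRatioRoot k b x) (hb : b ≠ 0)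
    (hk : 2 ≤ k) : 9 ^ (b % 3) * cubeRootFactor k b x ^ 3 = 1 := by
  have cube : ((1 + 3 ^ k * x ^ 3) ^ (3⁻¹ : ℂ)) ^ 3 = 1 + 3 ^ k * x ^ 3 :=
    Complex.cpow_ofNat_inv_pow _ _
  have ne_zero := pow_ne_zero 3 (h.one_add_cpow_ne_zero hb hk)
  have split : (9 : ℂ) ^ b = 9 ^ (b % 3) * (9 ^ (b / 3)) ^ 3 := by
    rw [← pow_mul, ← pow_add, mul_comm, Nat.mod_add_div]
  rw [cubeRootFactor, div_pow, mul_div_assoc', div_eq_one_iff_eq ne_zero, cube, add_comm 1,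
    show (3 : ℂ) ^ k * x ^ 3 + 1 = _ from h, split]
  ring

theorem IsRatioRoot.norm_cubeRootFactor_le_one (h : IsRatioRoot k b x) (hb : b ≠ 0) (hk : 2 ≤ k) :
    ‖cubeRootFactor k b x‖ ≤ 1 := by
  have norm_eq := congrArg norm (h.nine_pow_mul_cubeRootFactor_pow hb hk)
  rw [norm_mul, norm_pow, norm_pow, norm_one, Complex.norm_ofNat] at norm_eq
  refine (pow_le_one_iff_of_nonneg (norm_nonneg _) three_ne_zero).1 (norm_eq ▸ ?_)
  exact le_mul_of_one_le_left (by positivity) (one_le_pow₀ (by norm_num))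

theorem finite_setOf_nine_pow_mul_pow_eq_one :
    {ξ : ℂ | ∃ r < 3, 9 ^ r * ξ ^ 3 = 1}.Finite := by
  classical
  refine ((range 3).biUnion fun r ↦
    (Polynomial.nthRoots 3 ((9 : ℂ) ^ r)⁻¹).toFinset).finite_toSet.subset ?_
  rintro ξ ⟨r, hr, h⟩
  simp only [coe_biUnion, Set.mem_iUnion, mem_coe, Multiset.mem_toFinset, mem_range]
  exact ⟨r, hr, (Polynomial.mem_nthRoots (by norm_num)).2 (eq_inv_of_mul_eq_one_right h)⟩

end RatioRoot

/-! ### The gap principle -/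

section PadeForm

open Polynomial

/-- The linear form `w₁ Q_m(z) - w₂ P_m(z)`, where `P_m / Q_m` is the Padé approximant of
`(1 + X) ^ (1/3)`. It is small when `w₁ / w₂` is close to `(1 + z) ^ (1/3)`. -/
noncomputable def padeForm {A : Type*} [CommRing A] (z w₁ w₂ : A) (m : ℕ) : A :=
  w₁ * aeval z (intPadePoly (-1) m) - w₂ * aeval z (intPadePoly 1 m)

theorem map_padeForm {A B : Type*} [CommRing A] [CommRing B] (f : A →+* B) (z w₁ w₂ : A) (m : ℕ) :
    f (padeForm z w₁ w₂ m) = padeForm (f z) (f w₁) (f w₂) m := by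
  have map_aeval (p : ℤ[X]) : f (aeval z p) = aeval (f z) p :=
    (aeval_algHom_apply f.toIntAlgHom z p).symm
  simp only [padeForm, map_sub, map_mul, map_aeval]

theorem exists_padeForm_ne_zero {A : Type*} [Field A] [Algebra ℚ A] {z w₁ : A} (hz : z ≠ 0)
    (hw₁ : w₁ ≠ 0) (w₂ : A) (m : ℕ) : ∃ m', m ≤ m' ∧ m' ≤ m + 1 ∧ padeForm z w₁ w₂ m' ≠ 0 := by
  by_contra! h
  have h₀ : padeForm z w₁ w₂ m = 0 := h m le_rfl m.le_succ
  have h₁ : padeForm z w₁ w₂ (m + 1) = 0 := h (m + 1) m.le_succ le_rfl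
  unfold padeForm at h₀ h₁
  refine mul_ne_zero hw₁ (aeval_intPadePoly_mul_sub_ne_zero m hz) ?_
  linear_combination aeval z (intPadePoly 1 m) * h₁ - aeval z (intPadePoly 1 (m + 1)) * h₀

theorem norm_padeForm_le {z₁ z₂ ξ w₁ w₂ : ℂ} (hz₁ : ‖z₁‖ ≤ 1 / 2) (hz₂ : ‖z₂‖ ≤ 1 / 2)
    (hξ : ‖ξ‖ ≤ 1) (hw₁ : ξ * (1 + z₁) ^ (3⁻¹ : ℂ) = w₁) (hw₂ : ξ * (1 + z₂) ^ (3⁻¹ : ℂ) = w₂)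
    (m : ℕ) : ‖padeForm z₁ w₁ w₂ m‖ ≤ 8 * 144 ^ m * (‖z₁‖ ^ (2 * m + 1) + ‖z₂‖) := by
  have near_one : ‖(1 + z₂) ^ (3⁻¹ : ℂ) - 1‖ ≤ 2 * ‖z₂‖ := by
    have := norm_one_add_cpow_sub_one_le (ν := 3⁻¹) (by norm_num [abs_le]) hz₂
    push_cast at this
    exact this
  have decompose : padeForm z₁ w₁ w₂ m = ξ * (((1 + z₁) ^ (3⁻¹ : ℂ) *
      aeval z₁ (intPadePoly (-1) m) - aeval z₁ (intPadePoly 1 m)) -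
      ((1 + z₂) ^ (3⁻¹ : ℂ) - 1) * aeval z₁ (intPadePoly 1 m)) := by
    rw [padeForm, ← hw₁, ← hw₂]
    ring
  calc ‖padeForm z₁ w₁ w₂ m‖
      ≤ 1 * (8 * 144 ^ m * ‖z₁‖ ^ (2 * m + 1) + 2 * ‖z₂‖ * (4 * 72 ^ m)) := by
        rw [decompose, norm_mul]
        gcongr
        refine (norm_sub_le _ _).trans ?_
        rw [norm_mul]
        gcongr
        · exact norm_one_add_cpow_mul_intPadePoly_sub_le m hz₁
        · exact norm_aeval_intPadePoly_one_le m hz₁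
    _ ≤ 1 * (8 * 144 ^ m * ‖z₁‖ ^ (2 * m + 1) + 2 * ‖z₂‖ * (4 * 144 ^ m)) := by
        gcongr
        norm_num
    _ = 8 * 144 ^ m * (‖z₁‖ ^ (2 * m + 1) + ‖z₂‖) := by ring

end PadeForm

/-- A cube root of `3`. With `γ = cbrtThree`, the substitution `s = γ ^ k * t` turns
`3 ^ k * t ^ 3` into `s ^ 3`, which reduces the denominators. -/
noncomputable def cbrtThree : ℂ := 3 ^ (3⁻¹ : ℂ)

theorem cbrtThree_pow_three : cbrtThree ^ 3 = 3 := Complex.cpow_ofNat_inv_pow _ _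

theorem isIntegral_cbrtThree : IsIntegral ℤ cbrtThree := by
  refine IsIntegral.of_pow (n := 3) (by norm_num) ?_
  rw [cbrtThree_pow_three]
  exact isIntegral_algebraMap (R := ℤ) (x := 3)

section Integrality

open Polynomial

theorem IsProdDenom.isIntegral_mul_prod_padeForm {ι : Type*} [Fintype ι] {D₁ D₂ : ℕ}
    {s₁ s₂ : ι → ℂ} (h₁ : IsProdDenom D₁ s₁) (h₂ : IsProdDenom D₂ s₂) {a₁ a₂ c₁ c₂ : ℂ}
    (ha₁ : IsIntegral ℤ a₁) (ha₂ : IsIntegral ℤ a₂) (hc₁ : IsIntegral ℤ c₁)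
    (hc₂ : IsIntegral ℤ c₂) (m : ℕ) :
    IsIntegral ℤ ((D₁ : ℂ) ^ (3 * m + 1) * D₂ *
      ∏ σ, padeForm (s₁ σ ^ 3) (a₁ * s₁ σ + c₁) (a₂ * s₂ σ + c₂) m) := by
  lift a₁ to integralClosure ℤ ℂ using ha₁
  lift a₂ to integralClosure ℤ ℂ using ha₂
  lift c₁ to integralClosure ℤ ℂ using hc₁
  lift c₂ to integralClosure ℤ ℂ using hc₂
  let R (a : ℤ) : (integralClosure ℤ ℂ)[X] :=
    expand _ 3 ((intPadePoly a m).map (algebraMap ℤ (integralClosure ℤ ℂ)))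
  have natDegree_R_le (a : ℤ) : (R a).natDegree ≤ 3 * m := by
    rw [natDegree_expand, mul_comm]
    exact Nat.mul_le_mul_left 3 (natDegree_map_le.trans (natDegree_intPadePoly_le a m))
  have aeval_R (a : ℤ) (s : ℂ) : aeval s (R a) = aeval (s ^ 3) (intPadePoly a m) := by
    simp only [R, expand_aeval, aeval_map_algebraMap]
  let p := (C a₁ * X + C c₁) * R (-1) - C c₂ * R 1
  have natDegree_p_le : p.natDegree ≤ 3 * m + 1 := by
    have := natDegree_mul_le_of_le (natDegree_linear_le (a := a₁) (b := c₁)) (natDegree_R_le (-1))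
    have := (natDegree_C_mul_le c₂ (R 1)).trans (natDegree_R_le 1)
    exact (natDegree_sub_le _ _).trans (max_le (by omega) (by omega))
  let q := C (-a₂) * R 1
  have natDegree_q_le : q.natDegree ≤ 3 * m + 1 :=
    (natDegree_C_mul_le _ _).trans ((natDegree_R_le 1).trans (Nat.le_succ _))
  have expansion (σ : ι) : padeForm (s₁ σ ^ 3) (a₁ * s₁ σ + c₁) (a₂ * s₂ σ + c₂) m =
      aeval (s₁ σ) p + s₂ σ * aeval (s₁ σ) q := by
    have algebraMap_eq (a : integralClosure ℤ ℂ) : algebraMap _ ℂ a = (a : ℂ) := rfl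
    simp only [padeForm, p, q, map_sub, map_mul, map_add, map_neg, aeval_C, aeval_X, aeval_R,
      algebraMap_eq]
    ring
  simp_rw [expansion]
  exact h₁.isIntegral_mul_prod_aeval_add h₂ natDegree_p_le natDegree_q_le

end Integrality

section Gap

/-- The Padé linear form attached to two solutions of the ratio equation. -/
noncomputable def ratioForm {A : Type*} [CommRing A] (k₁ b₁ : ℕ) (t₁ : A) (k₂ b₂ : ℕ) (t₂ : A)
    (m : ℕ) : A :=
  padeForm (3 ^ k₁ * t₁ ^ 3) (9 ^ (b₁ / 3) * (3 ^ k₁ * t₁ + 1)) (9 ^ (b₂ / 3) * (3 ^ k₂ * t₂ + 1)) m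

theorem map_ratioForm {A B : Type*} [CommRing A] [CommRing B] (f : A →+* B) (k₁ b₁ : ℕ) (t₁ : A)
    (k₂ b₂ : ℕ) (t₂ : A) (m : ℕ) :
    f (ratioForm k₁ b₁ t₁ k₂ b₂ t₂ m) = ratioForm k₁ b₁ (f t₁) k₂ b₂ (f t₂) m := by
  simp only [ratioForm, map_padeForm, map_mul, map_add, map_pow, map_ofNat, map_one]

theorem IsRatioRoot.exists_ratioForm_ne_zero {A : Type*} [Field A] [Algebra ℚ A] {k₁ b₁ : ℕ}
    {t₁ : A} (h : IsRatioRoot k₁ b₁ t₁) (hb : b₁ ≠ 0) (hk : k₁ ≠ 0) (k₂ b₂ : ℕ) (t₂ : A) (m : ℕ) :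
    ∃ m', m ≤ m' ∧ m' ≤ m + 1 ∧ ratioForm k₁ b₁ t₁ k₂ b₂ t₂ m' ≠ 0 := by
  have : CharZero A := algebraRat.charZero A
  exact exists_padeForm_ne_zero
    (mul_ne_zero (pow_ne_zero _ three_ne_zero) (pow_ne_zero _ (h.ne_zero hb)))
    (mul_ne_zero (pow_ne_zero _ (by norm_num)) (h.three_pow_mul_add_one_ne_zero hk)) _ m

theorem pow_add_mul_three_pow_le {k₁ k₂ m : ℕ} {z₁ z₂ : ℝ} (hz₁ : 0 ≤ z₁) (hz₂ : 0 ≤ z₂)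
    (h₁ : z₁ * 9 ^ k₁ ≤ 8) (h₂ : z₂ * 9 ^ k₂ ≤ 8) (hm : m ≠ 0) (hmk : 2 * m * k₁ ≤ k₂) :
    (z₁ ^ (2 * m) + z₂) * 3 ^ (4 * m * k₁) ≤ 2 * 64 ^ m := by
  have z₁_pow_le : z₁ ^ (2 * m) * 3 ^ (4 * m * k₁) ≤ 64 ^ m := by
    calc z₁ ^ (2 * m) * 3 ^ (4 * m * k₁) = ((z₁ * 9 ^ k₁) ^ 2) ^ m := by
          rw [show (9 : ℝ) = 3 ^ 2 by norm_num, ← pow_mul, ← pow_mul, mul_pow, ← pow_mul]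
          congr 2; ring
      _ ≤ (8 ^ 2) ^ m := by gcongr
      _ = 64 ^ m := by norm_num
  have z₂_mul_le : z₂ * 3 ^ (4 * m * k₁) ≤ 64 ^ m := by
    calc z₂ * 3 ^ (4 * m * k₁) ≤ z₂ * 3 ^ (2 * k₂) :=
          mul_le_mul_of_nonneg_left (pow_le_pow_right₀ (by norm_num) (by linarith)) hz₂
      _ = z₂ * 9 ^ k₂ := by rw [pow_mul]; norm_num
      _ ≤ 64 ^ 1 := by linarith
      _ ≤ 64 ^ m := pow_le_pow_right₀ (by norm_num) (Nat.pos_of_ne_zero hm)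
  linarith

theorem IsRatioRoot.norm_ratioForm_mul_le {k₁ k₂ b₁ b₂ m m' : ℕ} {x₁ x₂ : ℂ}
    (h₁ : IsRatioRoot k₁ b₁ x₁) (h₂ : IsRatioRoot k₂ b₂ x₂) (hb₁ : b₁ ≠ 0) (hb₂ : b₂ ≠ 0)
    (hk₁ : 2 ≤ k₁) (hξ : cubeRootFactor k₁ b₁ x₁ = cubeRootFactor k₂ b₂ x₂) (hm : m ≠ 0)
    (hmk : 2 * m * k₁ ≤ k₂) (hmm' : m ≤ m') (hm'm : m' ≤ m + 1) :
    ‖ratioForm k₁ b₁ x₁ k₂ b₂ x₂ m'‖ * 3 ^ (4 * m * k₁) ≤ 3 ^ (9 * (m + 1)) := by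
  have hk₂ : 2 ≤ k₂ := by nlinarith [Nat.pos_of_ne_zero hm]
  set z₁ := ‖(3 : ℂ) ^ k₁ * x₁ ^ 3‖
  set z₂ := ‖(3 : ℂ) ^ k₂ * x₂ ^ 3‖
  have z₁_le_half : z₁ ≤ 1 / 2 := h₁.norm_le_half hb₁ hk₁
  have form_le : ‖ratioForm k₁ b₁ x₁ k₂ b₂ x₂ m'‖ ≤ 8 * 144 ^ m' * (z₁ ^ (2 * m' + 1) + z₂) :=
    norm_padeForm_le z₁_le_half (h₂.norm_le_half hb₂ hk₂)
      (h₁.norm_cubeRootFactor_le_one hb₁ hk₁) (h₁.cubeRootFactor_mul hb₁ hk₁)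
      (hξ ▸ h₂.cubeRootFactor_mul hb₂ hk₂) m'
  have z₁_pow_le : z₁ ^ (2 * m' + 1) ≤ z₁ ^ (2 * m) :=
    pow_le_pow_of_le_one (norm_nonneg _) (by linarith) (by omega)
  calc ‖ratioForm k₁ b₁ x₁ k₂ b₂ x₂ m'‖ * 3 ^ (4 * m * k₁)
      ≤ 8 * 144 ^ m' * (z₁ ^ (2 * m' + 1) + z₂) * 3 ^ (4 * m * k₁) := by gcongr
    _ ≤ 8 * 144 ^ (m + 1) * (z₁ ^ (2 * m) + z₂) * 3 ^ (4 * m * k₁) := by gcongr; norm_num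
    _ = 8 * 144 ^ (m + 1) * ((z₁ ^ (2 * m) + z₂) * 3 ^ (4 * m * k₁)) := by ring
    _ ≤ 8 * 144 ^ (m + 1) * (2 * 64 ^ m) := by
        refine mul_le_mul_of_nonneg_left ?_ (by positivity)
        exact pow_add_mul_three_pow_le (norm_nonneg _) (norm_nonneg _)
          (h₁.norm_mul_nine_pow_le hb₁) (h₂.norm_mul_nine_pow_le hb₂) hm hmk
    _ = 2304 * 9216 ^ m := by rw [show (9216 : ℝ) = 144 * 64 by norm_num, mul_pow]; ring
    _ ≤ 19683 * 19683 ^ m := by gcongr <;> norm_num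
    _ = 3 ^ (9 * (m + 1)) := by rw [← pow_succ', pow_mul]; norm_num

variable {F : Type*} [Field F] [Algebra ℚ F]

/-- The solutions of the ratio equation to which the Padé approximants apply: `k` is large compared
with `b`, and the products of conjugates of `3 ^ (k/3) * t` have a small common denominator `D`. -/
structure IsPadeAdmissible (k b : ℕ) (t : F) (D : ℕ) : Prop where
  ne_zero : b ≠ 0
  le : 21 * b ≤ k
  isRatioRoot : IsRatioRoot k b t
  denom_pos : 0 < D
  denom_le : D ^ 3 ≤ 27 * 9 ^ (Module.finrank ℚ F * k + 3 * b)
  isProdDenom : IsProdDenom D fun σ : F →ₐ[ℚ] ℂ ↦ cbrtThree ^ k * σ t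

theorem IsPadeAdmissible.two_le {k b D : ℕ} {t : F} (h : IsPadeAdmissible k b t D) : 2 ≤ k := by
  have := h.le
  have := h.ne_zero
  omega

theorem IsPadeAdmissible.denom_pow_le {k b D : ℕ} {t : F} (h : IsPadeAdmissible k b t D) :
    D ^ 21 ≤ 3 ^ (21 + (14 * Module.finrank ℚ F + 2) * k) := by
  calc D ^ 21 = (D ^ 3) ^ 7 := by rw [← pow_mul]
    _ ≤ (27 * 9 ^ (Module.finrank ℚ F * k + 3 * b)) ^ 7 := Nat.pow_le_pow_left h.denom_le 7
    _ = 3 ^ (21 + 2 * (7 * (Module.finrank ℚ F * k) + 21 * b)) := by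
        rw [show 27 = 3 ^ 3 by norm_num, show 9 = 3 ^ 2 by norm_num, ← pow_mul, ← pow_add,
          ← pow_mul]
        congr 1; ring
    _ ≤ 3 ^ (21 + (14 * Module.finrank ℚ F + 2) * k) := by
        refine Nat.pow_le_pow_right (by norm_num) ?_
        linarith [h.le]

variable [FiniteDimensional ℚ F] {k₁ k₂ b₁ b₂ D₁ D₂ : ℕ} {t₁ t₂ : F}

theorem isIntegral_mul_prod_ratioForm
    (h₁ : IsProdDenom D₁ fun σ : F →ₐ[ℚ] ℂ ↦ cbrtThree ^ k₁ * σ t₁)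
    (h₂ : IsProdDenom D₂ fun σ : F →ₐ[ℚ] ℂ ↦ cbrtThree ^ k₂ * σ t₂) (b₁ b₂ m : ℕ) :
    IsIntegral ℤ (((D₁ ^ (3 * m + 1) * D₂ : ℕ) : ℂ) *
      ∏ σ : F →ₐ[ℚ] ℂ, σ (ratioForm k₁ b₁ t₁ k₂ b₂ t₂ m)) := by
  have integral_nine_pow (e : ℕ) : IsIntegral ℤ ((9 : ℂ) ^ e) :=
    (isIntegral_algebraMap (R := ℤ) (x := 9)).pow e
  have integral_slope (e k : ℕ) : IsIntegral ℤ (9 ^ e * cbrtThree ^ (2 * k)) :=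
    (integral_nine_pow e).mul (isIntegral_cbrtThree.pow _)
  convert h₁.isIntegral_mul_prod_padeForm h₂ (integral_slope (b₁ / 3) k₁)
    (integral_slope (b₂ / 3) k₂) (integral_nine_pow (b₁ / 3)) (integral_nine_pow (b₂ / 3)) m using 2
  · push_cast
    rfl
  · refine prod_congr rfl fun σ _ ↦ ?_
    rw [← RingHom.coe_coe, map_ratioForm, ratioForm, ← cbrtThree_pow_three]
    congr 1 <;> simp only [RingHom.coe_coe] <;> ring

namespace IsPadeAdmissible

theorem three_pow_le (h₁ : IsPadeAdmissible k₁ b₁ t₁ D₁) (h₂ : IsPadeAdmissible k₂ b₂ t₂ D₂)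
    (hξ : ∀ σ : F →ₐ[ℚ] ℂ, cubeRootFactor k₁ b₁ (σ t₁) = cubeRootFactor k₂ b₂ (σ t₂)) {m : ℕ}
    (hm : m ≠ 0) (hmk : 2 * m * k₁ ≤ k₂) :
    3 ^ (4 * m * k₁ * Module.finrank ℚ F) ≤
      D₁ ^ (3 * m + 4) * D₂ * 3 ^ (9 * (m + 1) * Module.finrank ℚ F) := by
  obtain ⟨m', hmm', hm'm, form_ne_zero⟩ := h₁.isRatioRoot.exists_ratioForm_ne_zero h₁.ne_zero
    (by have := h₁.two_le; omega) k₂ b₂ t₂ m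
  set θ := ratioForm k₁ b₁ t₁ k₂ b₂ t₂ m'
  set n := Module.finrank ℚ F
  have card_eq : Fintype.card (F →ₐ[ℚ] ℂ) = n := AlgHom.card ℚ F ℂ
  have lower := one_le_mul_prod_norm_of_isIntegral
    (Nat.mul_pos (Nat.pow_pos h₁.denom_pos) h₂.denom_pos) form_ne_zero
    (isIntegral_mul_prod_ratioForm h₁.isProdDenom h₂.isProdDenom b₁ b₂ m')
  have upper : (∏ σ : F →ₐ[ℚ] ℂ, ‖σ θ‖) * 3 ^ (4 * m * k₁ * n) ≤ 3 ^ (9 * (m + 1) * n) := by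
    rw [pow_mul _ _ n, pow_mul _ _ n, ← card_eq, ← card_univ, ← prod_const, ← prod_const,
      ← prod_mul_distrib]
    refine prod_le_prod (fun σ _ ↦ by positivity) fun σ _ ↦ ?_
    have := (h₁.isRatioRoot.map (σ : F →+* ℂ)).norm_ratioForm_mul_le
      (h₂.isRatioRoot.map (σ : F →+* ℂ)) h₁.ne_zero h₂.ne_zero h₁.two_le (hξ σ) hm hmk hmm' hm'm
    rwa [← map_ratioForm] at this
  have denom_le : D₁ ^ (3 * m' + 1) ≤ D₁ ^ (3 * m + 4) :=
    Nat.pow_le_pow_right h₁.denom_pos (by omega)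
  have : (3 : ℝ) ^ (4 * m * k₁ * n) ≤ D₁ ^ (3 * m + 4) * D₂ * 3 ^ (9 * (m + 1) * n) := by
    calc (3 : ℝ) ^ (4 * m * k₁ * n)
        ≤ ((D₁ ^ (3 * m' + 1) * D₂ : ℕ) * ∏ σ : F →ₐ[ℚ] ℂ, ‖σ θ‖) * 3 ^ (4 * m * k₁ * n) :=
          le_mul_of_one_le_left (by positivity) lower
      _ = (D₁ ^ (3 * m' + 1) : ℕ) * D₂ * ((∏ σ : F →ₐ[ℚ] ℂ, ‖σ θ‖) * 3 ^ (4 * m * k₁ * n)) := by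
          push_cast; ring
      _ ≤ (D₁ ^ (3 * m + 4) : ℕ) * D₂ * 3 ^ (9 * (m + 1) * n) := by gcongr
      _ = D₁ ^ (3 * m + 4) * D₂ * 3 ^ (9 * (m + 1) * n) := by push_cast; rfl
  exact_mod_cast this

theorem exponent_le (h₁ : IsPadeAdmissible k₁ b₁ t₁ D₁) (h₂ : IsPadeAdmissible k₂ b₂ t₂ D₂)
    (hξ : ∀ σ : F →ₐ[ℚ] ℂ, cubeRootFactor k₁ b₁ (σ t₁) = cubeRootFactor k₂ b₂ (σ t₂)) {m : ℕ}
    (hm : m ≠ 0) (hmk : 2 * m * k₁ ≤ k₂) :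
    84 * m * k₁ * Module.finrank ℚ F ≤
      (3 * m + 4) * (21 + (14 * Module.finrank ℚ F + 2) * k₁) +
      (21 + (14 * Module.finrank ℚ F + 2) * k₂) + 189 * (m + 1) * Module.finrank ℚ F := by
  have main := Nat.pow_le_pow_left (h₁.three_pow_le h₂ hξ hm hmk) 21
  have denom₁_le := h₁.denom_pow_le
  have denom₂_le := h₂.denom_pow_le
  set n := Module.finrank ℚ F
  refine (Nat.pow_le_pow_iff_right (by norm_num : 1 < 3)).1 ?_
  calc 3 ^ (84 * m * k₁ * n) = (3 ^ (4 * m * k₁ * n)) ^ 21 := by rw [← pow_mul]; congr 1; ring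
    _ ≤ (D₁ ^ (3 * m + 4) * D₂ * 3 ^ (9 * (m + 1) * n)) ^ 21 := main
    _ = (D₁ ^ 21) ^ (3 * m + 4) * D₂ ^ 21 * 3 ^ (189 * (m + 1) * n) := by ring
    _ ≤ (3 ^ (21 + (14 * n + 2) * k₁)) ^ (3 * m + 4) * 3 ^ (21 + (14 * n + 2) * k₂) *
          3 ^ (189 * (m + 1) * n) := by gcongr
    _ = 3 ^ ((3 * m + 4) * (21 + (14 * n + 2) * k₁) + (21 + (14 * n + 2) * k₂) +
          189 * (m + 1) * n) := by
        rw [← pow_mul, ← pow_add, ← pow_add, mul_comm (3 * m + 4)]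

theorem lt_of_cubeRootFactor_eq (h₁ : IsPadeAdmissible k₁ b₁ t₁ D₁)
    (h₂ : IsPadeAdmissible k₂ b₂ t₂ D₂)
    (hξ : ∀ σ : F →ₐ[ℚ] ℂ, cubeRootFactor k₁ b₁ (σ t₁) = cubeRootFactor k₂ b₂ (σ t₂))
    (hk₁ : 130 ≤ k₁) : k₂ < 96 * k₁ := by
  by_contra! hk₂
  have n_pos : 0 < Module.finrank ℚ F := Module.finrank_pos
  set n := Module.finrank ℚ F
  set m := k₂ / (2 * k₁)
  have le_m : 48 ≤ m := (Nat.le_div_iff_mul_le (by omega)).2 (by linarith)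
  have hmk : 2 * m * k₁ ≤ k₂ := by
    have : m * (2 * k₁) ≤ k₂ := Nat.div_mul_le_self k₂ (2 * k₁)
    linarith
  have lt_mk : k₂ < 2 * (m + 1) * k₁ := by
    have : k₂ < m * (2 * k₁) + 2 * k₁ := Nat.lt_div_mul_add (by omega)
    linarith
  have k₂_le : (14 * n + 2) * k₂ ≤ 16 * n * (2 * (m + 1) * k₁) :=
    Nat.mul_le_mul (by omega) lt_mk.le
  have k₁_le : (3 * m + 4) * ((14 * n + 2) * k₁) ≤ (3 * m + 4) * (16 * n * k₁) :=
    Nat.mul_le_mul_left _ (Nat.mul_le_mul_right _ (by omega))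
  have const_le : (3 * m + 5) * 21 ≤ (3 * m + 5) * 21 * n := Nat.le_mul_of_pos_right _ n_pos
  have : n * (84 * m * k₁) ≤
      n * ((3 * m + 5) * 21 + (3 * m + 4) * 16 * k₁ + 32 * (m + 1) * k₁ + 189 * (m + 1)) := by
    linarith [h₁.exponent_le h₂ hξ (by omega) hmk]
  have := Nat.le_of_mul_le_mul_left this n_pos
  nlinarith [Nat.mul_le_mul_right k₁ le_m, Nat.mul_le_mul_left m hk₁]

end IsPadeAdmissible

theorem finite_setOf_isPadeAdmissible (F : Type*) [Field F] [Algebra ℚ F] [FiniteDimensional ℚ F] :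
    {p : ℕ × ℕ | ∃ (t : F) (D : ℕ), IsPadeAdmissible p.1 p.2 t D}.Finite := by
  set S := {p : ℕ × ℕ | ∃ (t : F) (D : ℕ), IsPadeAdmissible p.1 p.2 t D}
  choose! t D hD using fun p (hp : p ∈ S) ↦ hp
  let ξ (p : ℕ × ℕ) (σ : F →ₐ[ℚ] ℂ) : ℂ := cubeRootFactor p.1 p.2 (σ (t p))
  refine Set.Finite.of_finite_fibers ξ ?_ fun ξ₀ _ ↦ ?_
  · refine (Set.Finite.pi' fun _ ↦ finite_setOf_nine_pow_mul_pow_eq_one).subset ?_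
    rintro _ ⟨p, hp, rfl⟩ σ
    exact ⟨p.2 % 3, Nat.mod_lt _ three_pos, ((hD p hp).isRatioRoot.map
      (σ : F →+* ℂ)).nine_pow_mul_cubeRootFactor_pow (hD p hp).ne_zero (hD p hp).two_le⟩
  · obtain ⟨K, hK⟩ : ∃ K, ∀ p ∈ S ∩ ξ ⁻¹' {ξ₀}, p.1 < K := by
      by_cases large : ∃ p₁ ∈ S ∩ ξ ⁻¹' {ξ₀}, 130 ≤ p₁.1
      · obtain ⟨p₁, ⟨hp₁, hξ₁⟩, hk⟩ := large
        exact ⟨96 * p₁.1, fun p hp ↦ (hD p₁ hp₁).lt_of_cubeRootFactor_eq (hD p hp.1)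
          (congrFun (hξ₁.trans hp.2.symm)) hk⟩
      · push Not at large
        exact ⟨130, large⟩
    refine (range K ×ˢ range K).finite_toSet.subset fun p hp ↦ ?_
    have := hK p hp
    have := (hD p hp.1).le
    simp only [coe_product, coe_range, Set.mem_prod, Set.mem_Iio]
    omega

end Gap

/-! ### Cubes of Eisenstein integers -/

section Eisenstein

/-- The norm form `p² - pq + q²` of `p + qη`, where `η` is a primitive cube root of unity. -/
def eisNorm (p q : ℤ) : ℤ := p ^ 2 - p * q + q ^ 2

theorem eisNorm_nonneg (p q : ℤ) : 0 ≤ eisNorm p q := by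
  unfold eisNorm
  nlinarith [sq_nonneg (p - q), sq_nonneg (p + q)]

section CommRing

variable {R : Type*} [CommRing R] {η : R}

theorem add_mul_mul_add_mul_sq (hη : η ^ 2 + η + 1 = 0) (s r : ℤ) :
    ((s : R) + r * η) * (s + r * η ^ 2) = eisNorm s r := by
  unfold eisNorm
  push_cast
  linear_combination ((s : R) * r + r ^ 2 * (η - 1)) * hη

theorem add_mul_cube (hη : η ^ 2 + η + 1 = 0) (m n : ℤ) :
    ((m : R) + n * η) ^ 3 =
      (m ^ 3 + n ^ 3 - 3 * m * n ^ 2 : ℤ) + (3 * m * n * (m - n) : ℤ) * η := by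
  push_cast
  linear_combination (3 * m * n ^ 2 + n ^ 3 * (η - 1) : R) * hη

theorem add_mul_inj [CharZero R] (hη : η ^ 2 + η + 1 = 0) {m n m' n' : ℤ}
    (h : (m : R) + n * η = m' + n' * η) : m = m' ∧ n = n' := by
  have norm_eq_zero : eisNorm (m - m') (n - n') = 0 := by
    have : ((eisNorm (m - m') (n - n') : ℤ) : R) = 0 := by
      rw [← add_mul_mul_add_mul_sq hη]
      push_cast
      linear_combination ((m : R) - m' + (n - n') * η ^ 2) * h
    exact_mod_cast this
  unfold eisNorm at norm_eq_zero
  constructor <;> nlinarith [sq_nonneg (m - m' - 2 * (n - n')), sq_nonneg (2 * (m - m') - (n - n'))]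

theorem isCoprime_add_mul_add_mul_sq (hη : η ^ 2 + η + 1 = 0) {s r : ℤ} (hsr : IsCoprime s r)
    (h3 : IsCoprime 3 (s + r)) : IsCoprime ((s : R) + r * η) (s + r * η ^ 2) := by
  obtain ⟨u, v, huv⟩ := hsr
  obtain ⟨c, d, hcd⟩ := h3
  have huv : (u : R) * s + v * r = 1 := by exact_mod_cast congrArg (Int.cast (R := R)) huv
  have hcd : (c : R) * 3 + d * (s + r) = 1 := by exact_mod_cast congrArg (Int.cast (R := R)) hcd
  have hη₃ : η ^ 3 = 1 := by linear_combination (η - 1) * hη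
  have sub_one_eq : η - 1 =
      (u * η - v * η ^ 2) * (s + r * η) + (-u + v * η ^ 2) * (s + r * η ^ 2) := by
    linear_combination (1 - η) * huv - (v * r * (η - 1) : R) * hη₃
  have one_eq : 1 = (c * (η ^ 2 - 1) - d * r) * (η - 1) + d * (s + r * η) := by
    linear_combination -hcd - c * hη₃ + c * hη
  refine ⟨(c * (η ^ 2 - 1) - d * r) * (u * η - v * η ^ 2) + d,
    (c * (η ^ 2 - 1) - d * r) * (-u + v * η ^ 2), ?_⟩
  linear_combination -one_eq - (c * (η ^ 2 - 1) - d * r) * sub_one_eq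

end CommRing

open NumberField IsCyclotomicExtension.Rat

variable {K : Type*} [Field K] [NumberField K] [IsCyclotomicExtension {3} ℚ K]
  {ζ : K} (hζ : IsPrimitiveRoot ζ 3)

theorem exists_eq_add_mul_toInteger (x : 𝓞 K) : ∃ m n : ℤ, x = m + n * hζ.toInteger := by
  have hη : hζ.toInteger ^ 2 + hζ.toInteger + 1 = 0 := Three.eta_sq_add_eta_add_one hζ
  have hx : x ∈ Algebra.adjoin ℤ {hζ.toInteger} := by
    rw [← hζ.integralPowerBasis_gen, hζ.integralPowerBasis.adjoin_gen_eq_top]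
    exact Algebra.mem_top
  induction hx using Algebra.adjoin_induction with
  | mem y hy => exact ⟨0, 1, by simpa using hy⟩
  | algebraMap r => exact ⟨r, 0, by simp⟩
  | add a b _ _ ha hb =>
    obtain ⟨m, n, rfl⟩ := ha
    obtain ⟨m', n', rfl⟩ := hb
    exact ⟨m + m', n + n', by push_cast; ring⟩
  | mul a b _ _ ha hb =>
    obtain ⟨m, n, rfl⟩ := ha
    obtain ⟨m', n', rfl⟩ := hb
    refine ⟨m * m' - n * n', m * n' + n * m' - n * n', ?_⟩
    push_cast
    linear_combination (n * n' : 𝓞 K) * hη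

theorem exists_unit_eq_cube_mul_pow (u : (𝓞 K)ˣ) :
    ∃ v : 𝓞 K, ∃ i < 3, (u : 𝓞 K) = v ^ 3 * hζ.toInteger ^ i := by
  have := Three.Units.mem hζ u
  simp only [List.mem_cons, List.not_mem_nil, or_false] at this
  rcases this with rfl | rfl | rfl | rfl | rfl | rfl
  · exact ⟨1, 0, by simp⟩
  · exact ⟨-1, 0, by norm_num⟩
  · exact ⟨1, 1, by simp⟩
  · exact ⟨-1, 1, by norm_num⟩
  · exact ⟨1, 2, by simp⟩
  · exact ⟨-1, 2, by norm_num⟩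

theorem exists_add_mul_eq_cube_mul_pow {s r x : ℤ} (hsr : IsCoprime s r)
    (h3 : IsCoprime 3 (s + r)) (h : eisNorm s r = x ^ 3) :
    ∃ m n : ℤ, ∃ i < 3, (s : 𝓞 K) + r * hζ.toInteger =
      (m + n * hζ.toInteger) ^ 3 * hζ.toInteger ^ i := by
  have : IsPrincipalIdealRing (𝓞 K) := three_pid K
  have hη : hζ.toInteger ^ 2 + hζ.toInteger + 1 = 0 := Three.eta_sq_add_eta_add_one hζ
  obtain ⟨d, u, hd⟩ := exists_associated_pow_of_mul_eq_pow'
    (isCoprime_add_mul_add_mul_sq hη hsr h3)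
    (show _ = (x : 𝓞 K) ^ 3 by rw [add_mul_mul_add_mul_sq hη, h]; push_cast; rfl)
  obtain ⟨v, i, hi, hu⟩ := exists_unit_eq_cube_mul_pow hζ u
  obtain ⟨m, n, hmn⟩ := exists_eq_add_mul_toInteger hζ (d * v)
  exact ⟨m, n, i, hi, by rw [← hd, hu, ← hmn]; ring⟩

end Eisenstein

theorem exists_cube_of_eisNorm_eq_cube {s r x : ℤ} (hsr : IsCoprime s r) (hr : 3 ∣ r)
    (h : eisNorm s r = x ^ 3) :
    ∃ m n : ℤ, s = m ^ 3 + n ^ 3 - 3 * m * n ^ 2 ∧ r = 3 * m * n * (m - n) := by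
  have : IsCyclotomicExtension {3} ℚ (CyclotomicField 3 ℚ) :=
    CyclotomicField.isCyclotomicExtension 3 ℚ
  have : NumberField (CyclotomicField 3 ℚ) := IsCyclotomicExtension.numberField {3} ℚ _
  have hζ := IsCyclotomicExtension.zeta_spec 3 ℚ (CyclotomicField 3 ℚ)
  have hη : hζ.toInteger ^ 2 + hζ.toInteger + 1 = 0 :=
    IsCyclotomicExtension.Rat.Three.eta_sq_add_eta_add_one hζ
  have hs : ¬ 3 ∣ s := fun hs ↦ Int.prime_three.not_isUnit (hsr.isUnit_of_dvd' hs hr)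
  have h3 : IsCoprime 3 (s + r) :=
    (Prime.coprime_iff_not_dvd Int.prime_three).2 ((Int.dvd_add_left hr).not.2 hs)
  obtain ⟨m, n, i, hi, hmn⟩ := exists_add_mul_eq_cube_mul_pow hζ hsr h3 h
  rw [add_mul_cube hη] at hmn
  set P := m ^ 3 + n ^ 3 - 3 * m * n ^ 2
  set Q := 3 * m * n * (m - n) with hQ
  have hQ₃ : 3 ∣ Q := ⟨m * n * (m - n), by rw [hQ]; ring⟩
  interval_cases i
  · exact ⟨m, n, add_mul_inj hη (by rw [hmn, pow_zero, mul_one])⟩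
  · obtain ⟨s_eq, -⟩ := add_mul_inj hη (m' := -Q) (n' := P - Q) (hmn.trans (by
      push_cast
      linear_combination (Q : NumberField.RingOfIntegers (CyclotomicField 3 ℚ)) * hη))
    exact absurd (s_eq ▸ hQ₃.neg_right) hs
  · obtain ⟨s_eq, r_eq⟩ := add_mul_inj hη (m' := Q - P) (n' := -P) (hmn.trans (by
      push_cast
      linear_combination ((P : NumberField.RingOfIntegers (CyclotomicField 3 ℚ)) +
        Q * (hζ.toInteger - 1)) * hη))
    exact absurd (show 3 ∣ s by rw [s_eq, sub_eq_add_neg, ← r_eq]; exact hQ₃.add hr) hs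

/-! ### Descent on `p³ + q³ = 3^f u³` -/

theorem exists_cubes_of_add_eq_zero {a b c w : ℤ} {f : ℕ} (hab : IsCoprime a b)
    (hsum : a + b + c = 0) (hc : 3 ^ f ∣ c) (hprod : a * b * c = 3 ^ f * w ^ 3) :
    ∃ x y z : ℤ, a = x ^ 3 ∧ b = y ^ 3 ∧ c = 3 ^ f * z ^ 3 := by
  obtain ⟨c, rfl⟩ := hc
  have hprod : a * b * c = w ^ 3 :=
    mul_left_cancel₀ (pow_ne_zero f three_ne_zero) (by rw [← hprod]; ring)
  have hac : IsCoprime a c := by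
    refine IsCoprime.of_mul_right_right (y := 3 ^ f) ?_
    rw [show 3 ^ f * c = -b + a * (-1) by linarith]
    exact hab.neg_right.add_mul_left_right _
  have hbc : IsCoprime b c := by
    refine IsCoprime.of_mul_right_right (y := 3 ^ f) ?_
    rw [show 3 ^ f * c = -a + b * (-1) by linarith]
    exact hab.symm.neg_right.add_mul_left_right _
  have odd_three : Odd 3 := by decide
  obtain ⟨x, hx⟩ := Int.eq_pow_of_mul_eq_pow_odd_left (hab.mul_right hac) odd_three
    (show a * (b * c) = w ^ 3 by rw [← hprod]; ring)
  obtain ⟨y, hy⟩ := Int.eq_pow_of_mul_eq_pow_odd_left (hab.symm.mul_right hbc) odd_three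
    (show b * (a * c) = w ^ 3 by rw [← hprod]; ring)
  obtain ⟨z, hz⟩ := Int.eq_pow_of_mul_eq_pow_odd_right (hac.mul_left hbc) odd_three hprod
  exact ⟨x, y, z, hx, hy, by rw [hz]⟩

theorem eisNorm_le_three_mul_sq {x y : ℤ} (h : x ^ 2 ≤ y ^ 2) : eisNorm x y ≤ 3 * y ^ 2 := by
  unfold eisNorm
  nlinarith [sq_nonneg (x + y)]

theorem eisNorm_comm (x y : ℤ) : eisNorm x y = eisNorm y x := by
  unfold eisNorm
  ring

theorem eisNorm_cube_le_of_sq_le {x y M : ℤ} (hx : 3 * (x ^ 3) ^ 2 ≤ M)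
    (hy : 3 * (y ^ 3) ^ 2 ≤ M) : eisNorm x y ^ 3 ≤ 9 * M := by
  wlog hxy : x ^ 2 ≤ y ^ 2 generalizing x y
  · rw [eisNorm_comm]
    exact this hy hx (le_of_not_ge hxy)
  have := eisNorm_nonneg x y
  calc eisNorm x y ^ 3 ≤ (3 * y ^ 2) ^ 3 := by gcongr; exact eisNorm_le_three_mul_sq hxy
    _ = 9 * (3 * (y ^ 3) ^ 2) := by ring
    _ ≤ 9 * M := by gcongr

theorem exists_sum_cubes_of_dvd {a b c w : ℤ} {f : ℕ} (hab : IsCoprime a b)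
    (hsum : a + b + c = 0) (hc : 3 ^ f ∣ c) (hw : w ≠ 0) (hprod : a * b * c = 3 ^ f * w ^ 3) :
    ∃ x y z : ℤ, IsCoprime x y ∧ z ≠ 0 ∧ x ^ 3 + y ^ 3 = 3 ^ f * z ^ 3 ∧
      eisNorm x y ^ 3 ≤ 18 * (a ^ 2 + b ^ 2 + c ^ 2) := by
  obtain ⟨x, y, z, rfl, rfl, rfl⟩ := exists_cubes_of_add_eq_zero hab hsum hc hprod
  refine ⟨x, y, -z, (IsCoprime.pow_iff three_pos three_pos).1 hab, ?_, by linarith, ?_⟩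
  · rintro hz
    rw [neg_eq_zero.1 hz] at hprod
    simp [hw] at hprod
  · rw [show 3 ^ f * z ^ 3 = -(x ^ 3 + y ^ 3) by linarith]
    refine (eisNorm_cube_le_of_sq_le
      (M := 2 * ((x ^ 3) ^ 2 + (y ^ 3) ^ 2 + (-(x ^ 3 + y ^ 3)) ^ 2)) ?_ ?_).trans_eq (by ring)
    · nlinarith [sq_nonneg (2 * y ^ 3 + x ^ 3)]
    · nlinarith [sq_nonneg (2 * x ^ 3 + y ^ 3)]

theorem pow_dvd_or_pow_dvd_of_isCoprime {R : Type*} [CommRing R] [IsDomain R] {π a b : R}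
    (hπ : Prime π) (hab : IsCoprime a b) {f : ℕ} (h : π ^ f ∣ a * b) : π ^ f ∣ a ∨ π ^ f ∣ b := by
  by_cases ha : π ∣ a
  · have hb : ¬ π ∣ b := fun hb ↦ hπ.not_isUnit (hab.isUnit_of_dvd' ha hb)
    exact .inl (hπ.pow_dvd_of_dvd_mul_right _ hb h)
  · exact .inr (hπ.pow_dvd_of_dvd_mul_left _ ha h)

/-- One of the pairwise coprime `m`, `n`, `m - n` absorbs `3^f`, so up to sign they are two cubes
and `3^f` times a cube. -/
theorem exists_sum_cubes_of_mul_mul_sub {m n w : ℤ} {f : ℕ} (hmn : IsCoprime m n) (hw : w ≠ 0)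
    (hprod : m * n * (m - n) = 3 ^ f * w ^ 3) :
    ∃ x y z : ℤ, IsCoprime x y ∧ z ≠ 0 ∧ x ^ 3 + y ^ 3 = 3 ^ f * z ^ 3 ∧
      eisNorm x y ^ 3 ≤ 36 * eisNorm m n := by
  have coprime_m : IsCoprime m (n - m) := by
    simpa [sub_eq_add_neg] using hmn.add_mul_left_right (-1)
  have coprime_n : IsCoprime (-n) (n - m) := by
    simpa [sub_eq_neg_add] using (hmn.symm.neg_left.neg_right).add_mul_left_right (-1)
  have three_pow_dvd : 3 ^ f ∣ m * (-n) * (n - m) := ⟨w ^ 3, by rw [← hprod]; ring⟩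
  rcases pow_dvd_or_pow_dvd_of_isCoprime Int.prime_three (coprime_m.mul_left coprime_n)
    three_pow_dvd with hd | hd
  · rcases pow_dvd_or_pow_dvd_of_isCoprime Int.prime_three hmn.neg_right hd with hd | hd
    · rw [show 36 * eisNorm m n = 18 * ((-n) ^ 2 + (n - m) ^ 2 + m ^ 2) by unfold eisNorm; ring]
      exact exists_sum_cubes_of_dvd coprime_n (by ring) hd hw (by rw [← hprod]; ring)
    · rw [show 36 * eisNorm m n = 18 * ((n - m) ^ 2 + m ^ 2 + (-n) ^ 2) by unfold eisNorm; ring]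
      exact exists_sum_cubes_of_dvd coprime_m.symm (by ring) hd hw (by rw [← hprod]; ring)
  · rw [show 36 * eisNorm m n = 18 * (m ^ 2 + (-n) ^ 2 + (n - m) ^ 2) by unfold eisNorm; ring]
    exact exists_sum_cubes_of_dvd hmn.neg_right (by ring) hd hw (by rw [← hprod]; ring)

theorem exists_cube_factors {p q u : ℤ} {f : ℕ} (hpq : IsCoprime p q)
    (h : p ^ 3 + q ^ 3 = 3 ^ (f + 3) * u ^ 3) :
    ∃ w x : ℤ, p + q = 3 ^ (f + 2) * w ^ 3 ∧ eisNorm p q = 3 * x ^ 3 ∧ w * x = u := by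
  obtain ⟨r, hr⟩ : 3 ∣ p + q := by
    refine Int.prime_three.dvd_of_dvd_pow (n := 3) ⟨3 ^ (f + 2) * u ^ 3 + p * q * (p + q), ?_⟩
    linear_combination h
  have norm_eq : eisNorm p q = 3 * (3 * r ^ 2 - p * q) := by
    unfold eisNorm
    linear_combination (p + q + 3 * r) * hr
  have hmul : r * (3 * r ^ 2 - p * q) = 3 ^ (f + 1) * u ^ 3 := by
    have : 9 * (r * (3 * r ^ 2 - p * q)) = 9 * (3 ^ (f + 1) * u ^ 3) := by
      linear_combination h - ((p + q) ^ 2 + 3 * r * (p + q) + 9 * r ^ 2 - 3 * p * q) * hr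
    linarith
  have coprime_sum : IsCoprime (p + q) (p * q) := by
    refine .mul_right ?_ ?_
    · simpa [add_comm] using (hpq.add_mul_left_right 1).symm
    · simpa using (hpq.symm.add_mul_left_right 1).symm
  rw [hr] at coprime_sum
  have coprime_of_dvd_three_mul {d : ℤ} (hd : d ∣ 3 * r) : IsCoprime d (p * q) :=
    coprime_sum.of_isCoprime_of_dvd_left hd
  have coprime_r : IsCoprime r (3 * r ^ 2 - p * q) := by
    rw [show 3 * r ^ 2 - p * q = -(p * q) + r * (3 * r) by ring]
    exact (coprime_of_dvd_three_mul (dvd_mul_left r 3)).neg_right.add_mul_left_right _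
  have coprime_three : IsCoprime 3 (3 * r ^ 2 - p * q) := by
    rw [show 3 * r ^ 2 - p * q = -(p * q) + 3 * r ^ 2 by ring]
    exact (coprime_of_dvd_three_mul (dvd_mul_right 3 r)).neg_right.add_mul_left_right _
  obtain ⟨r, rfl⟩ : 3 ^ (f + 1) ∣ r :=
    coprime_three.pow_left.dvd_of_dvd_mul_right (Dvd.intro _ hmul.symm)
  have hmul : r * (3 * (3 ^ (f + 1) * r) ^ 2 - p * q) = u ^ 3 :=
    mul_left_cancel₀ (pow_ne_zero (f + 1) three_ne_zero) (by rw [← hmul]; ring)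
  have odd_three : Odd 3 := by decide
  obtain ⟨w, hw⟩ := Int.eq_pow_of_mul_eq_pow_odd_left coprime_r.of_mul_left_right odd_three hmul
  obtain ⟨x, hx⟩ := Int.eq_pow_of_mul_eq_pow_odd_right coprime_r.of_mul_left_right odd_three hmul
  refine ⟨w, x, by rw [hr, hw]; ring, by rw [norm_eq, hx], odd_three.pow_inj.1 ?_⟩
  rw [mul_pow, ← hmul, hx, hw]

theorem exists_mul_mul_sub_of_sum_cubes {p q u : ℤ} {f : ℕ} (hpq : IsCoprime p q) (hu : u ≠ 0)
    (h : p ^ 3 + q ^ 3 = 3 ^ (f + 3) * u ^ 3) :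
    ∃ m n w : ℤ, IsCoprime m n ∧ w ≠ 0 ∧ m * n * (m - n) = 3 ^ f * w ^ 3 ∧
      eisNorm p q = 3 * eisNorm m n ^ 3 := by
  obtain ⟨w, x, hw, hx, rfl⟩ := exists_cube_factors hpq h
  obtain ⟨r, hr⟩ : ∃ r, r = 3 ^ (f + 1) * w ^ 3 := ⟨_, rfl⟩
  have hp : p = 3 * r - q := by rw [hr]; linear_combination hw
  have coprime_sr : IsCoprime (2 * r - q) r := by
    have : IsCoprime q (3 * r) := by
      simpa [hp] using hpq.symm.add_mul_left_right 1
    rw [show 2 * r - q = -q + r * 2 by ring]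
    exact this.of_mul_right_right.neg_left.add_mul_left_left 2
  obtain ⟨m, n, hs, hr'⟩ := exists_cube_of_eisNorm_eq_cube (x := x) coprime_sr
    (hr ▸ dvd_mul_of_dvd_left (dvd_pow_self 3 f.succ_ne_zero) _) (by
      have : 3 * eisNorm (2 * r - q) r = 3 * x ^ 3 := by
        rw [← hx, hp]
        unfold eisNorm
        ring
      linarith)
  refine ⟨m, n, w, ?_, left_ne_zero_of_mul hu, ?_, ?_⟩
  · refine isCoprime_of_prime_dvd ?_ ?_
    · rintro ⟨rfl, rfl⟩
      simp_all
    · rintro ℓ hℓ ⟨m, rfl⟩ ⟨n, rfl⟩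
      refine hℓ.not_isUnit (coprime_sr.isUnit_of_dvd' ?_ ?_)
      · exact ⟨ℓ ^ 2 * (m ^ 3 + n ^ 3 - 3 * m * n ^ 2), by rw [hs]; ring⟩
      · exact ⟨3 * m * (ℓ * n) * (ℓ * m - ℓ * n), by rw [hr']; ring⟩
  · have : 3 * (m * n * (m - n)) = 3 * (3 ^ f * w ^ 3) := by linear_combination hr - hr'
    linarith
  · rw [hp, show q = 2 * r - (m ^ 3 + n ^ 3 - 3 * m * n ^ 2) by linarith, hr']
    unfold eisNorm
    ring

theorem exists_descent {p q u : ℤ} {f : ℕ} (hpq : IsCoprime p q) (hu : u ≠ 0)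
    (h : p ^ 3 + q ^ 3 = 3 ^ (f + 3) * u ^ 3) :
    ∃ x y z : ℤ, IsCoprime x y ∧ z ≠ 0 ∧ x ^ 3 + y ^ 3 = 3 ^ f * z ^ 3 ∧
      eisNorm x y ^ 9 ≤ 3 ^ 9 * eisNorm p q := by
  obtain ⟨m, n, w, hmn, hw, hprod, norm_eq⟩ := exists_mul_mul_sub_of_sum_cubes hpq hu h
  obtain ⟨x, y, z, hxy, hz, hsum, norm_le⟩ := exists_sum_cubes_of_mul_mul_sub hmn hw hprod
  refine ⟨x, y, z, hxy, hz, hsum, ?_⟩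
  have := eisNorm_nonneg x y
  have := eisNorm_nonneg m n
  calc eisNorm x y ^ 9 = (eisNorm x y ^ 3) ^ 3 := by ring
    _ ≤ (36 * eisNorm m n) ^ 3 := by gcongr
    _ ≤ 3 ^ 9 * (3 * eisNorm m n ^ 3) := by nlinarith [pow_nonneg this 3]
    _ = 3 ^ 9 * eisNorm p q := by rw [norm_eq]

theorem three_pow_sq_le_of_sum_cubes {x y z : ℤ} {f : ℕ} (hz : z ≠ 0)
    (h : x ^ 3 + y ^ 3 = 3 ^ f * z ^ 3) : (3 ^ f) ^ 2 ≤ 4 * eisNorm x y ^ 3 := by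
  have sum_sq_le : (x + y) ^ 2 ≤ 4 * eisNorm x y := by
    unfold eisNorm
    nlinarith [sq_nonneg (x - y)]
  have one_le : 1 ≤ (z ^ 3) ^ 2 := Int.add_one_le_of_lt (sq_pos_of_ne_zero (pow_ne_zero 3 hz))
  calc (3 ^ f) ^ 2 ≤ (3 ^ f) ^ 2 * (z ^ 3) ^ 2 := le_mul_of_one_le_right (by positivity) one_le
    _ = (x + y) ^ 2 * eisNorm x y ^ 2 := by rw [← mul_pow, ← h]; unfold eisNorm; ring
    _ ≤ 4 * eisNorm x y * eisNorm x y ^ 2 := by gcongr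
    _ = 4 * eisNorm x y ^ 3 := by ring

theorem three_pow_le_eisNorm_of_sum_cubes {p q u : ℤ} {f : ℕ} (hpq : IsCoprime p q) (hu : u ≠ 0)
    (h : p ^ 3 + q ^ 3 = 3 ^ (f + 6) * u ^ 3) :
    (3 ^ f) ^ 54 ≤ 3 ^ 126 * eisNorm p q := by
  obtain ⟨x, y, z, hxy, hz, hsum, norm_le⟩ := exists_descent hpq hu h
  obtain ⟨x', y', z', -, hz', hsum', norm_le'⟩ := exists_descent hxy hz hsum
  have := eisNorm_nonneg p q
  have := eisNorm_nonneg x y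
  have := eisNorm_nonneg x' y'
  calc ((3 : ℤ) ^ f) ^ 54 = ((3 ^ f) ^ 2) ^ 27 := by ring
    _ ≤ (4 * eisNorm x' y' ^ 3) ^ 27 := by gcongr; exact three_pow_sq_le_of_sum_cubes hz' hsum'
    _ = 4 ^ 27 * (eisNorm x' y' ^ 9) ^ 9 := by ring
    _ ≤ 3 ^ 36 * (3 ^ 9 * eisNorm x y) ^ 9 := by gcongr; norm_num
    _ = 3 ^ 117 * eisNorm x y ^ 9 := by ring
    _ ≤ 3 ^ 117 * (3 ^ 9 * eisNorm p q) := by gcongr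
    _ = 3 ^ 126 * eisNorm p q := by ring

/-! ### Rational roots -/

section Rational

theorem eq_zero_of_three_pow_mul_cube_add_cube {i : ℕ} (hi : i < 3) {p q B c : ℤ}
    (hpq : IsCoprime p q) (hB : 9 ∣ B) (h : 3 ^ i * p ^ 3 + q ^ 3 = B * (3 ^ i * c * p + q) ^ 3) :
    i = 0 := by
  by_contra i_ne_zero
  obtain ⟨B, rfl⟩ := hB
  obtain ⟨d, hd⟩ : (3 : ℤ) ∣ 3 ^ i := dvd_pow_self 3 i_ne_zero
  obtain ⟨q, rfl⟩ : 3 ∣ q := by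
    refine Int.prime_three.dvd_of_dvd_pow (n := 3)
      ⟨3 * B * (3 ^ i * c * p + q) ^ 3 - d * p ^ 3, ?_⟩
    linear_combination h - p ^ 3 * hd
  have : 3 ∣ p := by
    refine Int.prime_three.dvd_of_dvd_pow (n := 3) ?_
    obtain rfl | rfl : i = 1 ∨ i = 2 := by omega
    · exact ⟨B * (3 * c * p + 3 * q) ^ 3 - 3 * q ^ 3, by linarith⟩
    · exact ⟨9 * B * (3 * c * p + q) ^ 3 - q ^ 3, by linarith⟩
  exact Int.prime_three.not_isUnit (hpq.isUnit_of_dvd' this (dvd_mul_right 3 q))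

theorem IsRatioRoot.exists_int {k b : ℕ} {t : ℚ} (h : IsRatioRoot k b t) (hb : b ≠ 0) :
    ∃ (j : ℕ) (p q : ℤ), k = 3 * j ∧ IsCoprime p q ∧ 0 < q ∧ q * (3 ^ j * t) = p ∧
      p ^ 3 + q ^ 3 = 9 ^ b * (9 ^ j * p + q) ^ 3 := by
  obtain ⟨j, i, hi, rfl⟩ : ∃ j i : ℕ, i < 3 ∧ k = 3 * j + i :=
    ⟨k / 3, k % 3, Nat.mod_lt _ three_pos, (Nat.div_add_mod k 3).symm⟩
  set s : ℚ := 3 ^ j * t with hs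
  have hpq : IsCoprime s.num s.den := Int.isCoprime_iff_gcd_eq_one.2 s.reduced
  have hst : s.den * s = s.num := Rat.den_mul_eq_num s
  have integer_equation : (3 : ℤ) ^ i * s.num ^ 3 + s.den ^ 3 =
      9 ^ b * (3 ^ i * 9 ^ j * s.num + s.den) ^ 3 := by
    have pow_three : (3 : ℚ) ^ (3 * j + i) = 3 ^ i * (3 ^ j) ^ 3 := by ring
    have pow_nine : (9 : ℚ) ^ j = (3 ^ j) ^ 2 := by rw [← pow_mul, mul_comm, pow_mul]; norm_num
    have h : 3 ^ (3 * j + i) * t ^ 3 + 1 = 9 ^ b * (3 ^ (3 * j + i) * t + 1) ^ 3 := h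
    rw [pow_three] at h
    have : (3 : ℚ) ^ i * s.num ^ 3 + s.den ^ 3 =
        9 ^ b * (3 ^ i * 9 ^ j * s.num + s.den) ^ 3 := by
      rw [← hst, hs, pow_nine]
      linear_combination (s.den : ℚ) ^ 3 * h
    exact_mod_cast this
  obtain rfl := eq_zero_of_three_pow_mul_cube_add_cube hi hpq (dvd_pow_self 9 hb) integer_equation
  exact ⟨j, s.num, s.den, rfl, hpq, mod_cast s.den_pos, by rw [← hs]; exact_mod_cast hst,
    by simpa using integer_equation⟩

variable {p q A B : ℤ}

theorem mul_add_ne_zero_of_sum_cubes (hA : A ≠ 1) (hq : q ≠ 0)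
    (h : p ^ 3 + q ^ 3 = B * (A * p + q) ^ 3) : A * p + q ≠ 0 := by
  intro h0
  have odd_three : Odd 3 := by decide
  obtain rfl : p = -q := odd_three.pow_inj.1 (by rw [odd_three.neg_pow]; rw [h0] at h; linarith)
  have : (A - 1) * q = 0 := by linarith
  exact (mul_ne_zero (sub_ne_zero.2 hA) hq) this

theorem abs_lt_of_sum_cubes (hB : 1 < B) (hpq : IsCoprime p q)
    (h : p ^ 3 + q ^ 3 = B * (A * p + q) ^ 3) : |p| < B := by
  have : p ∣ B - 1 := by
    refine (hpq.pow_right (n := 3)).dvd_of_dvd_mul_left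
      ⟨p ^ 2 - B * (A * ((A * p) ^ 2 + 3 * A * p * q + 3 * q ^ 2)), ?_⟩
    linear_combination -h
  have := Int.le_of_dvd (by linarith) ((abs_dvd _ _).2 this)
  linarith

theorem le_mul_abs_of_sum_cubes (hA : 1 ≤ A) (hB : 4 ≤ B) (hq : 0 < q)
    (h : p ^ 3 + q ^ 3 = B * (A * p + q) ^ 3) : q ≤ 3 * A * |p| := by
  by_contra! hlt
  have abs_le : |p| ≤ A * |p| := le_mul_of_one_le_left (abs_nonneg p) hA
  have neg_le : -(A * |p|) ≤ A * p := by nlinarith [neg_abs_le p]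
  have lhs_le : 27 * p ^ 3 ≤ q ^ 3 := by
    calc 27 * p ^ 3 ≤ 27 * |p| ^ 3 := by rw [← abs_pow]; gcongr; exact le_abs_self _
      _ = (3 * |p|) ^ 3 := by ring
      _ ≤ q ^ 3 := by gcongr; linarith
  have le_rhs : (2 * q) ^ 3 ≤ (3 * (A * p + q)) ^ 3 :=
    pow_le_pow_left₀ (by linarith) (by linarith) 3
  have : 4 * (A * p + q) ^ 3 ≤ B * (A * p + q) ^ 3 := by
    gcongr
    exact pow_nonneg (by linarith) 3
  nlinarith [pow_pos hq 3]

theorem eisNorm_le_of_abs_le {M : ℤ} (hp : |p| ≤ M) (hq : |q| ≤ M) : eisNorm p q ≤ 3 * M ^ 2 := by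
  have := sq_le_sq' (neg_le_of_abs_le hp) (le_of_abs_le hp)
  have := sq_le_sq' (neg_le_of_abs_le hq) (le_of_abs_le hq)
  unfold eisNorm
  nlinarith [sq_nonneg (p + q)]

variable {j b : ℕ}

theorem abs_le_of_sum_cubes (hb : b ≠ 0) (hpq : IsCoprime p q) (hq : 0 < q)
    (h : p ^ 3 + q ^ 3 = 9 ^ b * (9 ^ j * p + q) ^ 3) :
    |p| ≤ 3 * 9 ^ j * 9 ^ b ∧ q ≤ 3 * 9 ^ j * 9 ^ b := by
  have one_le : (1 : ℤ) ≤ 9 ^ j := one_le_pow₀ (by norm_num)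
  have nine_le : (9 : ℤ) ≤ 9 ^ b := le_self_pow₀ (by norm_num) hb
  have abs_p := (abs_lt_of_sum_cubes (by linarith) hpq h).le
  refine ⟨by nlinarith, ?_⟩
  calc q ≤ 3 * 9 ^ j * |p| := le_mul_abs_of_sum_cubes one_le (by linarith) hq h
    _ ≤ 3 * 9 ^ j * 9 ^ b := by gcongr

theorem exponent_le_of_sum_cubes (hj : j ≠ 0) (hjb : j < 7 * b) (hpq : IsCoprime p q)
    (hq : 0 < q) (h : p ^ 3 + q ^ 3 = 9 ^ b * (9 ^ j * p + q) ^ 3) : b ≤ 5 := by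
  by_contra! hb
  obtain ⟨f, hf⟩ : ∃ f, 2 * b = f + 6 := ⟨2 * b - 6, by omega⟩
  have nine_pow (i : ℕ) : (9 : ℤ) ^ i = 3 ^ (2 * i) := by rw [pow_mul]; norm_num
  have hu : 9 ^ j * p + q ≠ 0 :=
    mul_add_ne_zero_of_sum_cubes (one_lt_pow₀ (by norm_num) hj).ne' hq.ne' h
  obtain ⟨abs_p, q_le⟩ := abs_le_of_sum_cubes (by omega) hpq hq h
  have upper := eisNorm_le_of_abs_le abs_p (by rwa [abs_of_pos hq])
  have lower := three_pow_le_eisNorm_of_sum_cubes (f := f) hpq hu (by rw [h, nine_pow, hf])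
  have : (3 : ℤ) ^ (f * 54) ≤ 3 ^ (129 + 4 * j + 4 * b) := by
    calc (3 : ℤ) ^ (f * 54) = (3 ^ f) ^ 54 := pow_mul ..
      _ ≤ 3 ^ 126 * (3 * (3 * 9 ^ j * 9 ^ b) ^ 2) := lower.trans (by gcongr)
      _ = 3 ^ (129 + 4 * j + 4 * b) := by rw [nine_pow, nine_pow]; ring
  have := (pow_le_pow_iff_right₀ (by norm_num : (1 : ℤ) < 3)).1 this
  omega

theorem isPadeAdmissible_natAbs {t : ℚ} (hb : b ≠ 0) (hjb : 7 * b ≤ j)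
    (ht : IsRatioRoot (3 * j) b t) (hpq : IsCoprime p q) (hq : 0 < q) (hqt : q * (3 ^ j * t) = p)
    (h : p ^ 3 + q ^ 3 = 9 ^ b * (9 ^ j * p + q) ^ 3) :
    IsPadeAdmissible (3 * j) b t q.natAbs where
  ne_zero := hb
  le := by omega
  isRatioRoot := ht
  denom_pos := by omega
  denom_le := by
    have q_le := (abs_le_of_sum_cubes hb hpq hq h).2
    have : (q.natAbs : ℤ) ^ 3 ≤ 27 * 9 ^ (Module.finrank ℚ ℚ * (3 * j) + 3 * b) := by
      rw [Int.natCast_natAbs, abs_of_pos hq, Module.finrank_self]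
      calc q ^ 3 ≤ (3 * 9 ^ j * 9 ^ b) ^ 3 := by gcongr
        _ = 27 * 9 ^ (1 * (3 * j) + 3 * b) := by ring
    exact_mod_cast this
  isProdDenom I := by
    have : ((q.natAbs : ℕ) : ℂ) = (q : ℂ) := by rw [Nat.cast_natAbs, abs_of_pos hq]
    rw [this]
    rcases I.eq_empty_or_nonempty with rfl | ⟨σ, hσ⟩
    · simpa using isIntegral_algebraMap (R := ℤ) (A := ℂ) (x := q)
    · obtain rfl : I = {σ} :=
        eq_singleton_iff_unique_mem.2 ⟨hσ, fun τ _ ↦ Subsingleton.elim τ σ⟩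
      have eq_p : (q : ℂ) * (cbrtThree ^ (3 * j) * σ t) = p := by
        rw [pow_mul, cbrtThree_pow_three]
        simpa using congrArg σ hqt
      rw [prod_singleton, eq_p]
      exact isIntegral_algebraMap (R := ℤ) (x := p)

theorem finite_setOf_isRatioRoot_rat :
    {p : ℕ × ℕ | p.1 ≠ 0 ∧ p.2 ≠ 0 ∧ ∃ t : ℚ, IsRatioRoot p.1 p.2 t}.Finite := by
  refine ((finite_setOf_isPadeAdmissible ℚ).union
    ((Set.finite_Iic 105).prod (Set.finite_Iic 5))).subset ?_
  rintro ⟨k, b⟩ ⟨hk : k ≠ 0, hb : b ≠ 0, t, ht : IsRatioRoot k b t⟩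
  obtain ⟨j, p, q, rfl, hpq, hq, hqt, h⟩ := ht.exists_int hb
  rcases le_or_gt (7 * b) j with hjb | hjb
  · exact .inl ⟨t, q.natAbs, isPadeAdmissible_natAbs hb hjb ht hpq hq hqt h⟩
  · have := exponent_le_of_sum_cubes (by omega) hjb hpq hq h
    exact .inr ⟨show 3 * j ≤ 105 by omega, this⟩

end Rational

/-! ### Powers of three in Pell solutions -/

section LiftingTheExponent

variable {R : Type*} [CommRing R]

theorem three_dvd_of_pow_succ_dvd_pow_sub_one (h3 : IsLeftRegular (3 : R)) {e n : ℕ} {K : R}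
    (he : e ≠ 0) (hK : ¬ 3 ∣ K) (h : 3 ^ (e + 1) ∣ (1 + 3 ^ e * K) ^ n - 1) : 3 ∣ n := by
  have hquad : (3 : R) ^ (e + 1) ∣ (1 + 3 ^ e * K) ^ n - 3 ^ e * K * n - 1 := by
    have hsq := sq_dvd_add_pow_sub_sub (3 ^ e * K) 1 n
    rw [one_pow, one_mul, one_pow, mul_pow, ← pow_mul] at hsq
    exact ((pow_dvd_pow 3 (by lia)).trans (dvd_mul_right _ _)).trans hsq
  obtain ⟨c, hc⟩ : (3 : R) ^ (e + 1) ∣ 3 ^ e * (K * n) := by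
    convert dvd_sub h hquad using 1
    ring
  have hdvd : (3 : R) ∣ K * n := ⟨c, h3.pow e (by linear_combination hc)⟩
  by_contra hn
  have hcop : IsCoprime (3 : R) n := by
    exact_mod_cast ((Nat.Prime.coprime_iff_not_dvd Nat.prime_three).2 hn).cast (R := R)
  exact hK (hcop.dvd_of_dvd_mul_right hdvd)

theorem three_pow_dvd_of_pow_add_dvd_pow_sub_one (h3 : IsLeftRegular (3 : R)) {e j n : ℕ} {K : R}
    (he : e ≠ 0) (hK : ¬ 3 ∣ K) (h : 3 ^ (e + j) ∣ (1 + 3 ^ e * K) ^ n - 1) : 3 ^ j ∣ n := by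
  induction j generalizing e n K with
  | zero => simp
  | succ j ih =>
    obtain ⟨m, rfl⟩ := three_dvd_of_pow_succ_dvd_pow_sub_one h3 he hK
      ((pow_dvd_pow 3 (by lia)).trans h)
    obtain ⟨i, rfl⟩ := Nat.exists_eq_succ_of_ne_zero he
    set K' : R := K + 3 * (3 ^ i * K ^ 2 + 3 ^ (2 * i) * K ^ 3) with hK'
    have hcube : (1 + 3 ^ (i + 1) * K) ^ 3 = 1 + 3 ^ (i + 1 + 1) * K' := by rw [hK']; ring
    have hK'_dvd : ¬ 3 ∣ K' := by rwa [hK', dvd_add_left (dvd_mul_right _ _)]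
    rw [pow_succ']
    refine mul_dvd_mul_left 3 (ih (e := i + 1 + 1) (by lia) hK'_dvd ?_)
    rw [← hcube, ← pow_mul, show i + 1 + 1 + j = i + 1 + (j + 1) by ring]
    exact h

theorem exists_forall_three_pow_sub_dvd (h3 : IsLeftRegular (3 : R)) {x : R} (hx : 3 ∣ x - 1)
    (hfin : FiniteMultiplicity 3 (x - 1)) :
    ∃ e, ∀ b n : ℕ, 3 ^ b ∣ x ^ n - 1 → 3 ^ (b - e) ∣ n := by
  obtain ⟨K, hxK, hK⟩ := hfin.exists_eq_pow_mul_and_not_dvd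
  set e := multiplicity 3 (x - 1)
  have he : e ≠ 0 := by
    intro he
    rw [hxK, he, pow_zero, one_mul] at hx
    exact hK hx
  refine ⟨e, fun b n hb ↦ ?_⟩
  rcases le_total b e with hbe | heb
  · simp [hbe]
  · rw [eq_add_of_sub_eq' hxK, ← Nat.add_sub_cancel' heb] at hb
    exact three_pow_dvd_of_pow_add_dvd_pow_sub_one h3 he hK hb

end LiftingTheExponent

section Pell

variable {d : ℤ}

theorem isLeftRegular_intCast_zsqrtd {c : ℤ} (hc : c ≠ 0) : IsLeftRegular (c : ℤ√d) :=
  fun _ _ h ↦ Zsqrtd.eq_of_smul_eq_smul_left hc h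

theorem finiteMultiplicity_intCast_zsqrtd {c : ℤ} (hc : c.natAbs ≠ 1) {z : ℤ√d} (hz : z ≠ 0) :
    FiniteMultiplicity (c : ℤ√d) z := by
  by_contra hinf
  have hdvd (n : ℕ) : c ^ n ∣ z.re ∧ c ^ n ∣ z.im := by
    rw [← Zsqrtd.intCast_dvd]
    exact_mod_cast FiniteMultiplicity.not_iff_forall.1 hinf n
  have hzero {w : ℤ} (hw : ∀ n, c ^ n ∣ w) : w = 0 := by
    by_contra hw0
    exact FiniteMultiplicity.not_iff_forall.2 hw (Int.finiteMultiplicity_iff.2 ⟨hc, hw0⟩)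
  exact hz (Zsqrtd.ext (hzero fun n ↦ (hdvd n).1) (hzero fun n ↦ (hdvd n).2))

theorem intCast_dvd_pow_four_sub_one {a : Pell.Solution₁ d} {c : ℤ} (h : c ∣ a.x) :
    (c : ℤ√d) ∣ (a : ℤ√d) ^ 4 - 1 := by
  have hsq : (a : ℤ√d) ^ 2 + 1 = a.x * (2 * a) := by
    have hnorm : a.x * a.x - d * (a.y * a.y) = 1 := by linear_combination a.prop
    ext
    · simp [pow_two, Pell.Solution₁.x, Pell.Solution₁.y] at hnorm ⊢
      linear_combination -hnorm
    · simp [pow_two, Pell.Solution₁.x]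
      ring
  have hfactor : (a : ℤ√d) ^ 4 - 1 = a.x * (2 * a * (a ^ 2 - 1)) := by
    linear_combination ((a : ℤ√d) ^ 2 - 1) * hsq
  rw [hfactor]
  exact ((Zsqrtd.intCast_dvd_intCast _ _).2 h).mul_right _

theorem two_pow_le_x_pow {a : Pell.Solution₁ d} (hd : 0 ≤ d) (hx : 1 < a.x) (hy : 0 ≤ a.y)
    (n : ℕ) : 2 ^ n ≤ (a ^ n).x ∧ 0 ≤ (a ^ n).y := by
  induction n with
  | zero => simp
  | succ n ih =>
    obtain ⟨ihx, ihy⟩ := ih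
    have hpow : (0 : ℤ) < 2 ^ n := by positivity
    have hxn : 0 < (a ^ n).x := hpow.trans_le ihx
    rw [pow_succ a, Pell.Solution₁.x_mul, Pell.Solution₁.y_mul]
    have hcross : 0 ≤ d * ((a ^ n).y * a.y) := by positivity
    exact ⟨by rw [pow_succ]; nlinarith, by positivity⟩

theorem exists_forall_three_pow_sub_dvd_of_dvd_x_pow {g : Pell.Solution₁ d}
    (hg : Pell.IsFundamental g) :
    ∃ e, ∀ b n : ℕ, 3 ^ b ∣ (g ^ n).x → 3 ^ (b - e) ∣ n := by
  have hpow_dvd {b n : ℕ} (h : 3 ^ b ∣ (g ^ n).x) : (3 : ℤ√d) ^ b ∣ (g : ℤ√d) ^ (4 * n) - 1 := by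
    have := intCast_dvd_pow_four_sub_one h
    rw [mul_comm, pow_mul]
    exact_mod_cast this
  by_cases hex : ∃ m ≠ 0, 3 ∣ (g ^ m).x
  · obtain ⟨m, hm, h3m⟩ := hex
    have hreg : IsLeftRegular (3 : ℤ√d) :=
      mod_cast isLeftRegular_intCast_zsqrtd (d := d) three_ne_zero
    have hdvd : (3 : ℤ√d) ∣ (g : ℤ√d) ^ (4 * m) - 1 := by
      simpa only [pow_one] using hpow_dvd (b := 1) (by simpa only [pow_one] using h3m)
    have hne : (g : ℤ√d) ^ (4 * m) - 1 ≠ 0 := by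
      intro h
      have : g ^ ((4 * m : ℕ) : ℤ) = 1 := by
        rw [zpow_natCast]
        exact Subtype.ext (sub_eq_zero.1 h)
      rw [hg.zpow_eq_one_iff] at this
      lia
    have hfin : FiniteMultiplicity (3 : ℤ√d) ((g : ℤ√d) ^ (4 * m) - 1) :=
      mod_cast finiteMultiplicity_intCast_zsqrtd (c := 3) (by decide) hne
    obtain ⟨e, he⟩ := exists_forall_three_pow_sub_dvd hreg hdvd hfin
    refine ⟨e, fun b n h ↦ he b n ((hpow_dvd h).trans ?_)⟩
    rw [← pow_mul, mul_right_comm, pow_mul _ (4 * n)]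
    simpa only [one_pow] using sub_dvd_pow_sub_pow ((g : ℤ√d) ^ (4 * n)) 1 m
  · push Not at hex
    refine ⟨0, fun b n h ↦ ?_⟩
    rcases eq_or_ne n 0 with rfl | hn
    · exact dvd_zero _
    · have hb : b = 0 := by
        by_contra hb
        exact hex n hn ((dvd_pow_self 3 hb).trans h)
      simp [hb]

theorem exists_forall_two_pow_three_pow_le_x (hd : 0 < d) (hsq : ¬ IsSquare d) :
    ∃ e, ∀ (b : ℕ) (a : Pell.Solution₁ d), 1 < a.x → 3 ^ b ∣ a.x → 2 ^ 3 ^ (b - e) ≤ a.x := by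
  obtain ⟨g, hg⟩ := Pell.IsFundamental.exists_of_not_isSquare hd hsq
  obtain ⟨e, he⟩ := exists_forall_three_pow_sub_dvd_of_dvd_x_pow hg
  refine ⟨e, fun b a hax hdvd ↦ ?_⟩
  have habs : a.x ^ 2 - d * |a.y| ^ 2 = 1 := by rw [sq_abs, a.prop]
  obtain ⟨n, hn⟩ := hg.eq_pow_of_nonneg (a := .mk a.x |a.y| habs)
    (by simpa using zero_lt_one.trans hax) (by simp)
  have hxn : a.x = (g ^ n).x := by rw [← hn, Pell.Solution₁.x_mk]
  have hn0 : n ≠ 0 := by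
    rintro rfl
    simp [hxn] at hax
  rw [hxn] at hdvd ⊢
  calc (2 : ℤ) ^ 3 ^ (b - e) ≤ 2 ^ n :=
        pow_le_pow_right₀ one_le_two (Nat.le_of_dvd (by lia) (he b n hdvd))
    _ ≤ (g ^ n).x := (two_pow_le_x_pow hd.le hg.1 hg.2.1.le n).1

theorem lt_three_pow_of_six_le {m : ℕ} (hm : 6 ≤ m) : 88 * m < 3 ^ m := by
  induction m, hm using Nat.le_induction with
  | base => norm_num
  | succ m hm ih => rw [pow_succ]; lia

theorem three_pow_add_three_pow_le {k b : ℕ} (hk : k < 21 * b) :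
    (3 : ℤ) ^ (k + b) + 3 ^ b ≤ 2 ^ (44 * b) := by
  obtain ⟨c, hc⟩ : ∃ c, 22 * b = c + 1 := ⟨22 * b - 1, by lia⟩
  calc (3 : ℤ) ^ (k + b) + 3 ^ b ≤ 3 ^ c + 3 ^ c := by gcongr <;> lia
    _ ≤ 3 ^ (22 * b) := by rw [hc, pow_succ]; linarith [pow_pos (zero_lt_three' ℤ) c]
    _ ≤ 4 ^ (22 * b) := by gcongr; norm_num
    _ = 2 ^ (44 * b) := by rw [show 44 * b = 2 * (22 * b) by ring, pow_mul 2 2]; norm_num only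

theorem finite_setOf_pell_three_pow_add_three_pow (d : ℤ) :
    {p : ℕ × ℕ | p.1 < 21 * p.2 ∧
      ∃ y : ℤ, (3 ^ (p.1 + p.2) + 3 ^ p.2) ^ 2 - d * y ^ 2 = 1}.Finite := by
  have hone_lt (k b : ℕ) : (1 : ℤ) < 3 ^ (k + b) + 3 ^ b := by
    linarith [one_le_pow₀ (n := k + b) (by norm_num : (1 : ℤ) ≤ 3),
      one_le_pow₀ (n := b) (by norm_num : (1 : ℤ) ≤ 3)]
  rcases Set.eq_empty_or_nonempty {p : ℕ × ℕ | p.1 < 21 * p.2 ∧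
    ∃ y : ℤ, (3 ^ (p.1 + p.2) + 3 ^ p.2) ^ 2 - d * y ^ 2 = 1} with hempty | ⟨p, -, y, hy⟩
  · exact hempty ▸ Set.finite_empty
  have hx : 1 < (Pell.Solution₁.mk _ y hy).x := hone_lt p.1 p.2
  obtain ⟨e, he⟩ := exists_forall_two_pow_three_pow_le_x
    (Pell.Solution₁.d_pos_of_one_lt_x hx) (Pell.Solution₁.d_nonsquare_of_one_lt_x hx)
  have hbound {k b : ℕ} (hk : k < 21 * b)
      (hy : ∃ y : ℤ, (3 ^ (k + b) + 3 ^ b) ^ 2 - d * y ^ 2 = 1) : b ≤ 2 * e + 6 := by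
    obtain ⟨y, hy⟩ := hy
    have hdvd : (3 : ℤ) ^ b ∣ 3 ^ (k + b) + 3 ^ b := dvd_add (pow_dvd_pow 3 (by lia)) dvd_rfl
    have hpow : (2 : ℤ) ^ 3 ^ (b - e) ≤ 2 ^ (44 * b) :=
      (he b (.mk _ y hy) (hone_lt k b) hdvd).trans (three_pow_add_three_pow_le hk)
    have hle : 3 ^ (b - e) ≤ 44 * b := (pow_le_pow_iff_right₀ one_lt_two).1 hpow
    by_contra! hlt
    have := lt_three_pow_of_six_le (m := b - e) (by lia)
    lia
  refine ((Set.finite_Iic (21 * (2 * e + 6))).prod (Set.finite_Iic (2 * e + 6))).subset ?_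
  rintro ⟨k, b⟩ ⟨hk, hy⟩
  have hb := hbound hk hy
  simp only [Set.mem_prod, Set.mem_Iic] at hk ⊢
  lia

end Pell

/-! ### Quadratic subfields -/

section QuadraticSubfields

open IntermediateField Polynomial

theorem dvd_of_squarefree_of_isSquare_mul {m n : ℕ} (hm : Squarefree m) (h : IsSquare (m * n)) :
    m ∣ n := by
  obtain ⟨z, hz⟩ := h
  obtain ⟨w, rfl⟩ : m ∣ z := by
    rw [← hm.dvd_pow_iff_dvd two_ne_zero, pow_two, ← hz]
    exact dvd_mul_right _ _
  exact ⟨w * w, Nat.eq_of_mul_eq_mul_left (Nat.pos_of_ne_zero hm.ne_zero) (by rw [hz]; ring)⟩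

theorem eq_of_squarefree_of_isSquare_mul {m n : ℕ} (hm : Squarefree m) (hn : Squarefree n)
    (h : IsSquare (m * n)) : m = n :=
  Nat.dvd_antisymm (dvd_of_squarefree_of_isSquare_mul hm h)
    (dvd_of_squarefree_of_isSquare_mul hn (mul_comm m n ▸ h))

variable {K L : Type*} [Field K] [Field L] [Algebra K L]

theorem exists_eq_add_mul_of_mem_adjoin {x y : L} {d : K} (hx : x ^ 2 = algebraMap K L d)
    (hy : y ∈ K⟮x⟯) : ∃ u v : K, y = algebraMap K L u + algebraMap K L v * x := by
  have hroot : aeval x (X ^ 2 - C d) = 0 := by simp [hx]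
  have hmonic : (X ^ 2 - C d).Monic := monic_X_pow_sub_C d two_ne_zero
  obtain ⟨p, rfl⟩ : ∃ p : K[X], aeval x p = y := by
    rwa [← AlgHom.mem_range, ← Algebra.adjoin_singleton_eq_range_aeval,
      ← adjoin_simple_toSubalgebra_of_isAlgebraic (IsIntegral.isAlgebraic ⟨_, hmonic, hroot⟩)]
  have hdeg : (p %ₘ (X ^ 2 - C d)).degree ≤ 1 := by
    have := degree_modByMonic_lt p hmonic
    rw [degree_X_pow_sub_C two_pos] at this
    exact Order.le_of_lt_succ this
  obtain ⟨v, u, hvu⟩ : ∃ v u, p %ₘ (X ^ 2 - C d) = C v * X + C u :=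
    ⟨_, _, eq_X_add_C_of_degree_le_one hdeg⟩
  refine ⟨u, v, ?_⟩
  rw [← aeval_modByMonic_eq_self_of_root hroot, hvu]
  simp [add_comm]

theorem isSquare_mul_of_mem_bot {x y : L} {d d' : K} (hx : x ^ 2 = algebraMap K L d)
    (hy : y ^ 2 = algebraMap K L d') (h : x * y ∈ (⊥ : IntermediateField K L)) :
    IsSquare (d * d') := by
  obtain ⟨r, hr⟩ := mem_bot.1 h
  refine ⟨r, (algebraMap K L).injective ?_⟩
  rw [map_mul, map_mul, hr, ← hx, ← hy]
  ring

theorem isSquare_mul_of_adjoin_eq_adjoin [NeZero (2 : K)] {x y : L} {d d' : K}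
    (hx : x ^ 2 = algebraMap K L d) (hy : y ^ 2 = algebraMap K L d') (hxy : K⟮x⟯ = K⟮y⟯) :
    IsSquare (d * d') := by
  refine isSquare_mul_of_mem_bot hx hy ?_
  by_cases hxbot : x ∈ (⊥ : IntermediateField K L)
  · have hybot : y ∈ (⊥ : IntermediateField K L) := by
      rw [← adjoin_simple_eq_bot_iff] at hxbot ⊢
      rw [← hxy, hxbot]
    exact mul_mem hxbot hybot
  obtain ⟨u, v, huv⟩ := exists_eq_add_mul_of_mem_adjoin hx (hxy ▸ mem_adjoin_simple_self K y)
  have hcoeff : 2 * u * v = 0 := by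
    by_contra h
    refine hxbot (mem_bot.2 ⟨(d' - u ^ 2 - v ^ 2 * d) / (2 * u * v), ?_⟩)
    rw [map_div₀, div_eq_iff (by rwa [_root_.map_ne_zero])]
    simp only [map_sub, map_mul, map_pow, map_ofNat, ← hx, ← hy, huv]
    ring
  have hv : v ≠ 0 := by
    rintro rfl
    have hy : y = algebraMap K L u := by simp [huv]
    refine hxbot (adjoin_simple_eq_bot_iff.1 ?_)
    rw [hxy, adjoin_simple_eq_bot_iff, hy]
    exact mem_bot.2 ⟨u, rfl⟩
  have hu : u = 0 := by simpa [hv, two_ne_zero] using hcoeff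
  refine mem_bot.2 ⟨v * d, ?_⟩
  rw [huv, hu, map_mul, ← hx, map_zero]
  ring

variable (L) [Algebra ℚ L] [FiniteDimensional ℚ L]

theorem finite_setOf_squarefree_isSquare {c : ℚ} (hc : c ≠ 0) :
    {n : ℕ | Squarefree n ∧ IsSquare (algebraMap ℚ L (c * n))}.Finite := by
  classical
  have : Finite (IntermediateField ℚ L) :=
    Field.finite_intermediateField_of_exists_primitive_element ℚ L
      (Field.exists_primitive_element ℚ L)
  have hsqrt (n : ℕ) : ∃ x : L, IsSquare (algebraMap ℚ L (c * n)) →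
      x ^ 2 = algebraMap ℚ L (c * n) := by
    by_cases h : IsSquare (algebraMap ℚ L (c * n))
    · obtain ⟨x, hx⟩ := h
      exact ⟨x, fun _ ↦ by rw [hx, pow_two]⟩
    · exact ⟨0, fun h' ↦ absurd h' h⟩
  choose x hx using hsqrt
  refine Set.Finite.of_finite_image (f := fun n ↦ ℚ⟮x n⟯) (Set.toFinite _) ?_
  rintro m ⟨hm, hmsq⟩ n ⟨hn, hnsq⟩ hmn
  obtain ⟨r, hr⟩ := isSquare_mul_of_adjoin_eq_adjoin (hx m hmsq) (hx n hnsq) hmn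
  have hmn_sq : IsSquare ((m * n : ℕ) : ℚ) := by
    refine ⟨r / c, ?_⟩
    push_cast
    field_simp
    linear_combination hr
  exact eq_of_squarefree_of_isSquare_mul hm hn (Rat.isSquare_natCast_iff.1 hmn_sq)

theorem finite_setOf_squarefree_coprime_isSquare {c : ℚ} (hc : c ≠ 0) :
    {m : ℕ | Squarefree m ∧ ∃ y N : ℕ, y ≠ 0 ∧ N ≠ 0 ∧ (y ^ 2 * m).Coprime N ∧
      IsSquare (algebraMap ℚ L (c * ((y ^ 2 * m) * N)))}.Finite := by
  refine ((finite_setOf_squarefree_isSquare L hc).biUnion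
    fun n _ ↦ n.divisors.finite_toSet).subset ?_
  rintro m ⟨hm, y, N, hy, hN, hcop, x, hx⟩
  obtain ⟨n, z, rfl, hn⟩ := Nat.sq_mul_squarefree N
  have hz : z ≠ 0 := by
    rintro rfl
    simp at hN
  have hmn : Squarefree (m * n) :=
    (Nat.squarefree_mul hcop.coprime_mul_left.coprime_mul_left_right).2 ⟨hm, hn⟩
  simp only [Set.mem_iUnion]
  refine ⟨m * n, ⟨hmn, x / algebraMap ℚ L (y * z), ?_⟩, ?_⟩
  · rw [div_mul_div_comm, ← hx, ← map_mul, ← map_div₀]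
    congr 1
    push_cast
    field_simp
  · exact Nat.mem_divisors.2 ⟨dvd_mul_right m n, hmn.ne_zero⟩

end QuadraticSubfields

/-! ### The discriminant of the ratio equation -/

section Discriminant

open Polynomial

theorem isSquare_cubic_discr_of_irreducible {K L : Type*} [Field K] [Field L] [Algebra K L]
    [Normal K L] {P : Cubic K} (ha : P.a ≠ 0) (hP : Irreducible P.toPoly) {t : L}
    (ht : aeval t P.toPoly = 0) : IsSquare (algebraMap K L P.discr) := by
  have hsplits : (P.toPoly.map (algebraMap K L)).Splits := by
    refine (Normal.splits ‹_› t).of_dvd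
      (Polynomial.map_ne_zero (minpoly.ne_zero (Normal.isIntegral ‹_› t))) (Polynomial.map_dvd _ ?_)
    rw [← minpoly.eq_of_irreducible hP ht]
    exact dvd_mul_right _ _
  obtain ⟨x, y, z, hroots⟩ := (Cubic.splits_iff_roots_eq_three ha).1 hsplits
  exact (Cubic.discr_eq_prod_three_roots ha hroots) ▸ IsSquare.sq _

/-- The cubic whose roots are the solutions `t` of `IsRatioRoot k b t`. -/
noncomputable def ratioCubic (k b : ℕ) : Cubic ℚ :=
  ⟨3 ^ k * (9 ^ k * 9 ^ b - 1), 3 * 9 ^ k * 9 ^ b, 3 * 3 ^ k * 9 ^ b, 9 ^ b - 1⟩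

variable {k b : ℕ}

theorem aeval_ratioCubic_eq_zero_iff {A : Type*} [CommRing A] [Algebra ℚ A] {t : A} :
    aeval t (ratioCubic k b).toPoly = 0 ↔ IsRatioRoot k b t := by
  have haeval : aeval t (ratioCubic k b).toPoly =
      9 ^ b * (3 ^ k * t + 1) ^ 3 - (3 ^ k * t ^ 3 + 1) := by
    simp only [Cubic.toPoly, ratioCubic, map_add, map_mul, map_pow, aeval_X, map_sub, map_one,
      map_ofNat]
    rw [show (9 : A) = 3 ^ 2 by norm_num, pow_right_comm 3 2 k]
    ring
  rw [haeval, sub_eq_zero, eq_comm, IsRatioRoot]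

theorem ratioCubic_a_ne_zero (hb : b ≠ 0) : (ratioCubic k b).a ≠ 0 := by
  have hpow : (1 : ℚ) < 9 ^ (k + b) := one_lt_pow₀ (by norm_num) (by lia)
  rw [pow_add] at hpow
  exact mul_ne_zero (by positivity) (sub_pos.2 hpow).ne'

theorem irreducible_ratioCubic (hb : b ≠ 0) (hirr : ∀ t : ℚ, ¬ IsRatioRoot k b t) :
    Irreducible (ratioCubic k b).toPoly := by
  refine irreducible_of_degree_le_three_of_not_isRoot ?_ fun t ht ↦ hirr t ?_
  · rw [Cubic.natDegree_of_a_ne_zero (ratioCubic_a_ne_zero hb)]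
    decide
  · rwa [← aeval_ratioCubic_eq_zero_iff, coe_aeval_eq_eval]

theorem ratioCubic_discr : (ratioCubic k b).discr = (3 * 3 ^ k) ^ 2 *
    (-3 * (((3 ^ (k + b) + 3 ^ b) ^ 2 - 1) * ((3 ^ (k + b) - 3 ^ b) ^ 2 - 1))) := by
  simp only [Cubic.discr, ratioCubic]
  rw [show (9 : ℚ) = 3 ^ 2 by norm_num, pow_right_comm 3 2 k, pow_right_comm 3 2 b, pow_add]
  ring

theorem IsRatioRoot.isSquare_discr {L : Type*} [Field L] [Algebra ℚ L] [Normal ℚ L] {t : L}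
    (h : IsRatioRoot k b t) (hb : b ≠ 0) (hirr : ∀ t : ℚ, ¬ IsRatioRoot k b t) :
    IsSquare (algebraMap ℚ L
      (-3 * (((3 ^ (k + b) + 3 ^ b) ^ 2 - 1) * ((3 ^ (k + b) - 3 ^ b) ^ 2 - 1)))) := by
  obtain ⟨x, hx⟩ := isSquare_cubic_discr_of_irreducible (ratioCubic_a_ne_zero hb)
    (irreducible_ratioCubic hb hirr) (aeval_ratioCubic_eq_zero_iff.2 h)
  have hc : algebraMap ℚ L (3 * 3 ^ k) ≠ 0 := by
    rw [_root_.map_ne_zero]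
    positivity
  refine ⟨x / algebraMap ℚ L (3 * 3 ^ k), ?_⟩
  rw [div_mul_div_comm, ← hx, ratioCubic_discr, map_mul _ ((3 * 3 ^ k) ^ 2), map_pow, ← pow_two,
    mul_div_cancel_left₀ _ (pow_ne_zero 2 hc)]

theorem isCoprime_sq_sub_one (hb : b ≠ 0) :
    IsCoprime ((3 ^ (k + b) + 3 ^ b) ^ 2 - 1 : ℤ) ((3 ^ (k + b) - 3 ^ b) ^ 2 - 1) := by
  have hsix : (6 : ℤ) ∣ 3 ^ (k + b) - 3 ^ b := by
    refine IsCoprime.mul_dvd (⟨-1, 1, by norm_num⟩ : IsCoprime (2 : ℤ) 3) ?_ ?_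
    · exact (Odd.pow (by decide)).sub_odd (Odd.pow (by decide)) |>.two_dvd
    · exact dvd_sub (dvd_pow_self 3 (by lia)) (dvd_pow_self 3 hb)
  obtain ⟨w, hw⟩ := hsix
  have hcop : IsCoprime (2 * 3 : ℤ) ((3 ^ (k + b) - 3 ^ b) ^ 2 - 1) :=
    ⟨6 * w ^ 2, -1, by rw [hw]; ring⟩
  have hdiff : ((3 ^ (k + b) + 3 ^ b) ^ 2 - 1 : ℤ) =
      2 ^ 2 * (3 ^ (k + b) * 3 ^ b) + 1 * ((3 ^ (k + b) - 3 ^ b) ^ 2 - 1) := by ring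
  rw [hdiff, IsCoprime.add_mul_right_left_iff]
  have hthree := hcop.of_mul_left_right
  exact hcop.of_mul_left_left.pow_left.mul_left (hthree.pow_left.mul_left hthree.pow_left)

theorem finite_setOf_isRatioRoot_of_lt (L : Type*) [Field L] [Algebra ℚ L] [FiniteDimensional ℚ L]
    [Normal ℚ L] :
    {p : ℕ × ℕ | p.1 ≠ 0 ∧ p.2 ≠ 0 ∧ p.1 < 21 * p.2 ∧ (∀ t : ℚ, ¬ IsRatioRoot p.1 p.2 t) ∧
      ∃ t : L, IsRatioRoot p.1 p.2 t}.Finite := by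
  refine ((finite_setOf_squarefree_coprime_isSquare L (c := -3) (by norm_num)).biUnion
    fun m _ ↦ finite_setOf_pell_three_pow_add_three_pow m).subset ?_
  rintro ⟨k, b⟩ ⟨hk, hb, hlt, hirr, t, ht⟩
  dsimp only at hk hb hlt hirr ht
  have hB : (3 : ℤ) ≤ 3 ^ b := le_self_pow₀ (by norm_num) hb
  have hA : 3 * (3 : ℤ) ^ b ≤ 3 ^ (k + b) := by
    rw [← pow_succ']
    exact pow_le_pow_right₀ (by norm_num) (by lia)
  have hM_pos : (0 : ℤ) < (3 ^ (k + b) + 3 ^ b) ^ 2 - 1 := by nlinarith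
  have hN_pos : (0 : ℤ) < (3 ^ (k + b) - 3 ^ b) ^ 2 - 1 := by nlinarith
  obtain ⟨M, hM⟩ := Int.eq_ofNat_of_zero_le hM_pos.le
  obtain ⟨N, hN⟩ := Int.eq_ofNat_of_zero_le hN_pos.le
  have hM0 : M ≠ 0 := by
    rintro rfl
    exact hM_pos.ne' hM
  have hN0 : N ≠ 0 := by
    rintro rfl
    exact hN_pos.ne' hN
  have hcop : M.Coprime N := by
    rw [← Nat.isCoprime_iff_coprime, ← hM, ← hN]
    exact isCoprime_sq_sub_one hb
  have hsq : IsSquare (algebraMap ℚ L (-3 * (M * N))) := by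
    convert ht.isSquare_discr hb hirr using 4
    · exact_mod_cast hM.symm
    · exact_mod_cast hN.symm
  obtain ⟨m, y, rfl, hm⟩ := Nat.sq_mul_squarefree M
  have hy : y ≠ 0 := by
    rintro rfl
    simp at hM0
  simp only [Set.mem_iUnion]
  refine ⟨m, ⟨hm, y, N, hy, hN0, hcop, by exact_mod_cast hsq⟩, hlt, y, ?_⟩
  push_cast at hM
  linear_combination hM

end Discriminant

/-! ### Integrality of products of roots -/

section ProdRoots

open Polynomial

variable {R S : Type*} [CommRing R] [CommRing S] [Algebra R S]

theorem isIntegral_leadingCoeff_mul_of_isRoot {f : S[X]} (hf : ∀ i, IsIntegral R (f.coeff i))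
    {α : S} (hα : f.IsRoot α) : IsIntegral R (f.leadingCoeff * α) := by
  obtain ⟨p, rfl⟩ : ∃ p : (integralClosure R S)[X], p.map (algebraMap _ S) = f :=
    (f.lifts_iff_coeff_lifts).2 fun i ↦ ⟨⟨f.coeff i, hf i⟩, rfl⟩
  rw [IsRoot, eval_map_algebraMap] at hα
  rw [leadingCoeff_map_of_injective Subtype.val_injective]
  exact isIntegral_trans _ (isIntegral_leadingCoeff_smul p α hα)

theorem isIntegral_coeff_C_mul_X_pow {a : S} (ha : IsIntegral R a) (n i : ℕ) :
    IsIntegral R ((C a * X ^ n).coeff i) := by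
  rw [coeff_C_mul_X_pow]
  split_ifs
  exacts [ha, isIntegral_zero]

theorem isIntegral_coeff_of_X_sub_C_mul {α : S} {g : S[X]}
    (h : ∀ i, IsIntegral R (((X - C α) * g).coeff i)) (i : ℕ) : IsIntegral R (g.coeff i) := by
  nontriviality S
  induction hn : #g.support using Nat.strong_induction_on generalizing g i with
  | _ n ih =>
    rcases eq_or_ne g 0 with rfl | hg
    · simpa using isIntegral_zero
    have hlead : IsIntegral R g.leadingCoeff := by
      rw [← leadingCoeff_monic_mul (monic_X_sub_C α)]
      exact h _
    have hlead_mul : IsIntegral R (g.leadingCoeff * α) := by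
      rw [← leadingCoeff_monic_mul (monic_X_sub_C α)]
      exact isIntegral_leadingCoeff_mul_of_isRoot h (by simp)
    have herase : (X - C α) * g.eraseLead = (X - C α) * g -
        (C g.leadingCoeff * X ^ (g.natDegree + 1) - C (g.leadingCoeff * α) * X ^ g.natDegree) := by
      rw [C_mul]
      linear_combination (X - C α) * g.eraseLead_add_C_mul_X_pow
    have herase_coeff (j : ℕ) : IsIntegral R (((X - C α) * g.eraseLead).coeff j) := by
      rw [herase, coeff_sub, coeff_sub]
      exact (h j).sub ((isIntegral_coeff_C_mul_X_pow hlead _ j).sub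
        (isIntegral_coeff_C_mul_X_pow hlead_mul _ j))
    rw [← g.eraseLead_add_C_mul_X_pow, coeff_add]
    exact (ih _ (hn ▸ eraseLead_support_card_lt hg) herase_coeff i rfl).add
      (isIntegral_coeff_C_mul_X_pow hlead _ i)

theorem isIntegral_coeff_of_prod_X_sub_C_mul (m : Multiset S) {g : S[X]}
    (h : ∀ i, IsIntegral R (((m.map fun α ↦ X - C α).prod * g).coeff i)) (i : ℕ) :
    IsIntegral R (g.coeff i) := by
  induction m using Multiset.induction generalizing i with
  | empty => simpa using h i
  | cons α m ih =>
    rw [Multiset.map_cons, Multiset.prod_cons, mul_assoc] at h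
    exact ih (isIntegral_coeff_of_X_sub_C_mul h) i

theorem isIntegral_leadingCoeff_mul_prod_of_le_roots [IsDomain S] {f : S[X]} (hs : f.Splits)
    (hf : ∀ i, IsIntegral R (f.coeff i)) {m : Multiset S} (hm : m ≤ f.roots) :
    IsIntegral R (f.leadingCoeff * m.prod) := by
  obtain ⟨m', hm'⟩ := Multiset.le_iff_exists_add.1 hm
  have hfactor : f = (m'.map fun α ↦ X - C α).prod *
      (C f.leadingCoeff * (m.map fun α ↦ X - C α).prod) := by
    conv_lhs => rw [hs.eq_prod_roots, hm', Multiset.map_add, Multiset.prod_add]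
    ring
  rw [hfactor] at hf
  have hcoeff := isIntegral_coeff_of_prod_X_sub_C_mul m' hf 0
  rw [coeff_zero_eq_eval_zero, eval_mul, eval_C, eval_multiset_prod, Multiset.map_map] at hcoeff
  convert hcoeff.mul (isIntegral_one.neg.pow m.card) using 1
  have hneg : (m.map (eval 0 ∘ fun α ↦ X - C α)).prod = (-1) ^ m.card * m.prod := by
    simp [Multiset.prod_map_neg]
  rw [hneg, mul_left_comm, mul_right_comm, ← mul_pow, neg_one_mul, neg_neg, one_pow, one_mul]

theorem isProdDenom_of_isRoot [IsDomain S] {ι : Type*} {f : S[X]} (hs : f.Splits)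
    (hf : ∀ i, IsIntegral ℤ (f.coeff i)) {D : ℕ} (hD : f.leadingCoeff = D) (hf₀ : f ≠ 0)
    {x : ι → S} (hinj : Function.Injective x) (hx : ∀ i, f.IsRoot (x i)) : IsProdDenom D x := by
  intro I
  rw [← hD]
  refine isIntegral_leadingCoeff_mul_prod_of_le_roots hs hf
    ((Multiset.le_iff_subset (I.nodup.map hinj)).2 fun α hα ↦ ?_)
  obtain ⟨i, -, rfl⟩ := Multiset.mem_map.1 hα
  exact (mem_roots hf₀).2 (hx i)

end ProdRoots

section Conjugates

open Polynomial IntermediateField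

variable {L : Type*} [Field L] [Algebra ℚ L] {k b : ℕ} {t : L}

/-- Shadows `DivisionRing.toRatAlgebra`, which is only propositionally equal to this structure. -/
local instance (E : IntermediateField ℚ L) : Algebra ℚ E := E.algebra'

/-- The cubic whose roots are `cbrtThree ^ k * t` for the roots `t` of `ratioCubic k b`. Its
coefficients are algebraic integers and its leading coefficient is smaller by a factor `3 ^ k`. -/
noncomputable def scaledRatioCubic (k b : ℕ) : Cubic ℂ :=
  ⟨9 ^ (k + b) - 1, 3 * cbrtThree ^ (4 * k) * 9 ^ b, 3 * cbrtThree ^ (2 * k) * 9 ^ b, 9 ^ b - 1⟩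

theorem isIntegral_coeff_scaledRatioCubic (i : ℕ) :
    IsIntegral ℤ ((scaledRatioCubic k b).toPoly.coeff i) := by
  have hnat (n : ℕ) : IsIntegral ℤ (n : ℂ) := map_natCast (algebraMap ℤ ℂ) n ▸ isIntegral_algebraMap
  have hthree : IsIntegral ℤ (3 : ℂ) := hnat 3
  have hnine (n : ℕ) : IsIntegral ℤ (9 ^ n : ℂ) := (hnat 9).pow n
  match i with
  | 0 => exact (Cubic.coeff_eq_d (P := scaledRatioCubic k b)) ▸ (hnine b).sub isIntegral_one
  | 1 => exact (Cubic.coeff_eq_c (P := scaledRatioCubic k b)) ▸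
      (hthree.mul (isIntegral_cbrtThree.pow _)).mul (hnine b)
  | 2 => exact (Cubic.coeff_eq_b (P := scaledRatioCubic k b)) ▸
      (hthree.mul (isIntegral_cbrtThree.pow _)).mul (hnine b)
  | 3 => exact (Cubic.coeff_eq_a (P := scaledRatioCubic k b)) ▸ (hnine (k + b)).sub isIntegral_one
  | i + 4 =>
    rw [Cubic.coeff_eq_zero (by lia)]
    exact isIntegral_zero

theorem IsRatioRoot.isRoot_scaledRatioCubic {t : ℂ} (h : IsRatioRoot k b t) :
    (scaledRatioCubic k b).toPoly.IsRoot (cbrtThree ^ k * t) := by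
  have hcube : (cbrtThree ^ k) ^ 3 = 3 ^ k := by rw [pow_right_comm, cbrtThree_pow_three]
  have hnine : (9 : ℂ) ^ k = (3 ^ k) ^ 2 := by rw [pow_right_comm]; norm_num
  unfold IsRatioRoot at h
  simp only [IsRoot, Cubic.toPoly, scaledRatioCubic, eval_add, eval_mul, eval_C, eval_pow, eval_X,
    pow_add, mul_comm _ k, pow_mul, hnine, ← hcube] at h ⊢
  linear_combination -h

theorem finrank_adjoin_of_isRatioRoot (hb : b ≠ 0) (hirr : ∀ t : ℚ, ¬ IsRatioRoot k b t)
    (h : IsRatioRoot k b t) : Module.finrank ℚ ℚ⟮t⟯ = 3 := by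
  have hirred := irreducible_ratioCubic hb hirr
  have hroot := aeval_ratioCubic_eq_zero_iff.2 h
  have hint : IsIntegral ℚ t := IsAlgebraic.isIntegral ⟨_, hirred.ne_zero, hroot⟩
  rw [adjoin.finrank hint, ← minpoly.eq_of_irreducible hirred hroot,
    natDegree_mul_C (inv_ne_zero (leadingCoeff_ne_zero.2 hirred.ne_zero)),
    Cubic.natDegree_of_a_ne_zero (ratioCubic_a_ne_zero hb)]

theorem IsRatioRoot.adjoin_gen (h : IsRatioRoot k b t) : IsRatioRoot k b (AdjoinSimple.gen ℚ t) :=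
  IsRatioRoot.of_map (f := algebraMap ℚ⟮t⟯ L) h (FaithfulSMul.algebraMap_injective _ _)

theorem IsRatioRoot.isProdDenom (hb : b ≠ 0) (h : IsRatioRoot k b t) :
    IsProdDenom (9 ^ (k + b) - 1)
      fun σ : ℚ⟮t⟯ →ₐ[ℚ] ℂ ↦ cbrtThree ^ k * σ (AdjoinSimple.gen ℚ t) := by
  have ha : (scaledRatioCubic k b).a = (9 ^ (k + b) - 1 : ℕ) := by
    rw [scaledRatioCubic, Nat.cast_pred (by positivity), Nat.cast_pow, Nat.cast_ofNat]
  have ha₀ : (scaledRatioCubic k b).a ≠ 0 := by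
    rw [ha, Nat.cast_ne_zero]
    exact (Nat.sub_pos_of_lt (Nat.one_lt_pow (by lia) (by norm_num))).ne'
  refine isProdDenom_of_isRoot (IsAlgClosed.splits _) isIntegral_coeff_scaledRatioCubic
    ((Cubic.leadingCoeff_of_a_ne_zero ha₀).trans ha) (Cubic.ne_zero_of_a_ne_zero ha₀)
    (fun σ τ hστ ↦ ?_) fun σ ↦ (h.adjoin_gen.map (σ : ℚ⟮t⟯ →+* ℂ)).isRoot_scaledRatioCubic
  have hint : IsIntegral ℚ t := IsAlgebraic.isIntegral
    ⟨_, Cubic.ne_zero_of_a_ne_zero (ratioCubic_a_ne_zero hb), aeval_ratioCubic_eq_zero_iff.2 h⟩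
  have hγ : cbrtThree ^ k ≠ 0 := by
    refine pow_ne_zero k fun h₀ ↦ ?_
    simpa [h₀] using cbrtThree_pow_three
  exact (adjoin.powerBasis hint).algHom_ext (mul_left_cancel₀ hγ hστ)

theorem IsRatioRoot.isPadeAdmissible (h : IsRatioRoot k b t) (hb : b ≠ 0) (hkb : 21 * b ≤ k)
    (hirr : ∀ t : ℚ, ¬ IsRatioRoot k b t) :
    IsPadeAdmissible k b (AdjoinSimple.gen ℚ t) (9 ^ (k + b) - 1) where
  ne_zero := hb
  le := hkb
  isRatioRoot := h.adjoin_gen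
  denom_pos := Nat.sub_pos_of_lt (Nat.one_lt_pow (by lia) (by norm_num))
  denom_le := by
    rw [finrank_adjoin_of_isRatioRoot hb hirr h, ← mul_add, mul_comm 3, pow_mul]
    exact (Nat.pow_le_pow_left (Nat.sub_le _ _) 3).trans (Nat.le_mul_of_pos_left _ (by norm_num))
  isProdDenom := h.isProdDenom hb

theorem finite_setOf_isRatioRoot_of_finiteDimensional (K : Type*) [Field K] [Algebra ℚ K]
    [FiniteDimensional ℚ K] :
    {p : ℕ × ℕ | p.1 ≠ 0 ∧ p.2 ≠ 0 ∧ ∃ t : K, IsRatioRoot p.1 p.2 t}.Finite := by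
  have : Finite (IntermediateField ℚ K) :=
    Field.finite_intermediateField_of_exists_primitive_element ℚ K
      (Field.exists_primitive_element ℚ K)
  let N := normalClosure ℚ K (AlgebraicClosure K)
  have hpade : (⋃ E : IntermediateField ℚ K,
      {p : ℕ × ℕ | ∃ (t : E) (D : ℕ), IsPadeAdmissible p.1 p.2 t D}).Finite :=
    Set.finite_iUnion fun E ↦ finite_setOf_isPadeAdmissible E
  refine ((finite_setOf_isRatioRoot_rat.union (finite_setOf_isRatioRoot_of_lt N)).union
    hpade).subset ?_
  rintro ⟨k, b⟩ ⟨hk, hb, t, ht⟩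
  dsimp only at hk hb ht
  by_cases! hirr : ∃ t : ℚ, IsRatioRoot k b t
  · exact .inl (.inl ⟨hk, hb, hirr⟩)
  · rcases lt_or_ge k (21 * b) with hlt | hle
    · exact .inl (.inr ⟨hk, hb, hlt, hirr, _, ht.map (algebraMap K N)⟩)
    · exact .inr (Set.mem_iUnion.2 ⟨ℚ⟮t⟯, _, _, ht.isPadeAdmissible hb hle hirr⟩)

theorem finite_setOf_isRatioRoot (F : Type*) [Field F] [Algebra ℚ F]
    [FiniteDimensional ℚ (algebraicClosure ℚ F)] :
    {p : ℕ × ℕ | p.1 ≠ 0 ∧ p.2 ≠ 0 ∧ ∃ t : F, IsRatioRoot p.1 p.2 t}.Finite := by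
  refine (finite_setOf_isRatioRoot_of_finiteDimensional (algebraicClosure ℚ F)).subset ?_
  rintro ⟨k, b⟩ ⟨hk, hb, t, ht⟩
  have halg : t ∈ algebraicClosure ℚ F := mem_algebraicClosure_iff.2
    ⟨_, Cubic.ne_zero_of_a_ne_zero (ratioCubic_a_ne_zero hb), aeval_ratioCubic_eq_zero_iff.2 ht⟩
  exact ⟨hk, hb, ⟨t, halg⟩, IsRatioRoot.of_map (f := algebraMap (algebraicClosure ℚ F) F) ht
    (FaithfulSMul.algebraMap_injective _ _)⟩

theorem finite_isRatioRoot (F : Type*) [Field F] [Algebra ℚ F] {k b : ℕ}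
    (hb : b ≠ 0) : {t : F | IsRatioRoot k b t}.Finite := by
  refine ((ratioCubic k b).toPoly.rootSet_finite F).subset fun t ht ↦ ?_
  exact Polynomial.mem_rootSet.2
    ⟨Cubic.ne_zero_of_a_ne_zero (ratioCubic_a_ne_zero hb), aeval_ratioCubic_eq_zero_iff.2 ht⟩

end Conjugates

/-! ### Algebraic elements of finitely generated fields -/

section AlgebraicClosure

variable {k F ι : Type*} [Field k] [Field F] [Algebra k F]

theorem linearDisjoint_adjoin_of_algebraicIndependent {x : ι → F} (K : IntermediateField k F)
    (hx : AlgebraicIndependent K x) :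
    K.toSubalgebra.LinearDisjoint (Algebra.adjoin k (Set.range x)) := by
  have hxk : AlgebraicIndependent k x := hx.restrictScalars (algebraMap k K).injective
  refine .of_basis_right _ _ ((MvPolynomial.basisMonomials ι k).map hxk.aevalEquiv.toLinearEquiv) ?_
  have monomials : LinearIndependent K
      ((MvPolynomial.aeval x).toLinearMap ∘ MvPolynomial.basisMonomials ι K) :=
    (MvPolynomial.basisMonomials ι K).linearIndependent.map' _ (LinearMap.ker_eq_bot.2 hx)
  convert! monomials using 1
  exact funext fun m ↦ by simp [MvPolynomial.aeval_monomial]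

variable (k F) in
open scoped IntermediateField.algebraAdjoinAdjoin in
theorem finiteDimensional_algebraicClosure [Algebra.EssFiniteType k F] :
    FiniteDimensional k (algebraicClosure k F) := by
  obtain ⟨s, hs⟩ := exists_finset_isTranscendenceBasis k F
  have range_coe : Set.range ((↑) : s → F) = s := Subtype.range_coe
  have algebraic := hs.isAlgebraic_field
  rw [range_coe] at algebraic
  let E := IntermediateField.adjoin k (s : Set F)
  have : Algebra.EssFiniteType E F := .of_comp k E F
  have : Module.Finite E F := Algebra.finite_of_essFiniteType_of_isAlgebraic
  let v := Module.Basis.ofVectorSpace k (algebraicClosure k F)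
  have disjoint := linearDisjoint_adjoin_of_algebraicIndependent (algebraicClosure k F)
    (hs.1.extendScalars (algebraicClosure k F))
  rw [range_coe] at disjoint
  have hv : LinearIndependent (Algebra.adjoin k (s : Set F)) (fun i ↦ (v i : F)) :=
    disjoint.linearIndependent_left_of_flat v.linearIndependent
  have := ((LinearIndependent.iff_fractionRing (Algebra.adjoin k (s : Set F)) E).1 hv).finite
  exact Module.Finite.of_basis v

end AlgebraicClosure

/-! ### Solutions of the system -/

section Solutions

variable {F : Type*} [Field F]

/-- The projective point with `Z₀ / Z₁ = t` on the line `3 ^ (k + b) Z₀ + 3 ^ b Z₁ + Z₂ = 0`. -/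
def linePoint (k b : ℕ) (t : F) : Projectivization F (Fin 3 → F) :=
  .mk F ![t, 1, -(3 ^ (k + b) * t + 3 ^ b)] fun h ↦ one_ne_zero (congrFun h 1)

variable {k b : ℕ} {Z : Fin 3 → F}

theorem mk_eq_linePoint (hZ : Z ≠ 0) (hZ₁ : Z 1 ≠ 0)
    (hline : 3 ^ (k + b) * Z 0 + 3 ^ b * Z 1 + Z 2 = 0) :
    Projectivization.mk F Z hZ = linePoint k b (Z 0 / Z 1) := by
  have hZ₂ : Z 2 = -(3 ^ (k + b) * Z 0 + 3 ^ b * Z 1) := by linear_combination hline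
  symm
  refine (Projectivization.mk_eq_mk_iff' ..).2 ⟨(Z 1)⁻¹, funext fun i ↦ ?_⟩
  fin_cases i
  · simp [div_eq_inv_mul]
  · simp [hZ₁]
  · simp only [Fin.isValue, Fin.reduceFinMk, Pi.smul_apply, hZ₂, neg_add_rev, smul_eq_mul,
      Matrix.cons_val]
    field_simp

variable [CharZero F]

theorem apply_one_ne_zero_of_powerSystem (hZ : Z ≠ 0) (hkb : k + b ≠ 0)
    (hcubic : 3 ^ (k + b) * Z 0 ^ 3 + 3 ^ b * Z 1 ^ 3 + Z 2 ^ 3 = 0)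
    (hline : 3 ^ (k + b) * Z 0 + 3 ^ b * Z 1 + Z 2 = 0) : Z 1 ≠ 0 := by
  intro hZ₁
  have hZ₂ : Z 2 = -(3 ^ (k + b) * Z 0) := by linear_combination hline - 3 ^ b * hZ₁
  have hne : (1 : F) - 9 ^ (k + b) ≠ 0 :=
    sub_ne_zero.2 (mod_cast (Nat.one_lt_pow hkb (by norm_num)).ne)
  have hprod : (3 : F) ^ (k + b) * (1 - 9 ^ (k + b)) * Z 0 ^ 3 = 0 := by
    rw [hZ₁, hZ₂] at hcubic
    rw [show (9 : F) = 3 ^ 2 by norm_num, ← pow_mul, mul_comm 2, pow_mul]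
    linear_combination hcubic
  have hZ₀ : Z 0 = 0 := by simpa [hne] using hprod
  refine hZ (funext fun i ↦ ?_)
  fin_cases i <;> simp [hZ₀, hZ₁, hZ₂]

theorem isRatioRoot_of_powerSystem (hZ₁ : Z 1 ≠ 0)
    (hcubic : 3 ^ (k + b) * Z 0 ^ 3 + 3 ^ b * Z 1 ^ 3 + Z 2 ^ 3 = 0)
    (hline : 3 ^ (k + b) * Z 0 + 3 ^ b * Z 1 + Z 2 = 0) : IsRatioRoot k b (Z 0 / Z 1) := by
  have hZ₂ : Z 2 = -(3 ^ (k + b) * Z 0 + 3 ^ b * Z 1) := by linear_combination hline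
  have hhom : (3 : F) ^ k * Z 0 ^ 3 + Z 1 ^ 3 = (3 ^ b) ^ 2 * (3 ^ k * Z 0 + Z 1) ^ 3 := by
    refine mul_left_cancel₀ (pow_ne_zero b three_ne_zero) ?_
    rw [hZ₂, pow_add] at hcubic
    linear_combination hcubic
  rw [IsRatioRoot, show (9 : F) = 3 ^ 2 by norm_num, ← pow_mul, mul_comm 2, pow_mul]
  field_simp
  linear_combination hhom

end Solutions

end PowerSystem

theorem finitely_many_solutions_of_power_system_general
    (F₀ : Type*) [Field F₀] [CharZero F₀] [FiniteDimensional ℚ (algebraicClosure ℚ F₀)] :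
    {x : ℕ × ℕ × Projectivization F₀ (Fin 3 → F₀) |
      x.2.1 < x.1 ∧ 0 < x.2.1 ∧
      ∃ (Z : Fin 3 → F₀) (hZ : Z ≠ 0), x.2.2 = Projectivization.mk F₀ Z hZ ∧
        (3 : F₀) ^ x.1 * Z 0 ^ 3 + (3 : F₀) ^ x.2.1 * Z 1 ^ 3 + Z 2 ^ 3 = 0 ∧
        (3 : F₀) ^ x.1 * Z 0 + (3 : F₀) ^ x.2.1 * Z 1 + Z 2 = 0}.Finite := by
  have hfin := (PowerSystem.finite_setOf_isRatioRoot F₀).biUnion fun p hp ↦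
    (PowerSystem.finite_isRatioRoot F₀ (k := p.1) hp.2.1).image fun t ↦
      (p.1 + p.2, p.2, PowerSystem.linePoint p.1 p.2 t)
  refine hfin.subset ?_
  rintro ⟨a, b, P⟩ ⟨hab, hb, Z, hZ, rfl, hcubic, hline⟩
  dsimp only at hab hb hcubic hline
  obtain ⟨k, rfl⟩ : ∃ k, a = k + b := ⟨a - b, by omega⟩
  have hZ₁ := PowerSystem.apply_one_ne_zero_of_powerSystem hZ (by omega) hcubic hline
  have hroot := PowerSystem.isRatioRoot_of_powerSystem hZ₁ hcubic hline
  refine Set.mem_biUnion (x := (k, b)) ⟨by omega, by omega, _, hroot⟩ ⟨_, hroot, ?_⟩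
  rw [PowerSystem.mk_eq_linePoint hZ hZ₁ hline]

/-- **Key finiteness (proof of Theorem `thm:precise 2`):** for `F₀` a finitely generated
field of characteristic `0`, the system `3^a₁ Z₁³ + 3^a₂ Z₂³ + Z₃³ = 0`,
`3^a₁ Z₁ + 3^a₂ Z₂ + Z₃ = 0` has only finitely many solutions `(a₁, a₂, [Z₁:Z₂:Z₃])` with
integers `a₁ > a₂ > 0` and `[Z₁:Z₂:Z₃] ∈ ℙ²(F₀)`. -/
theorem finitely_many_solutions_of_power_system
    (F₀ : Type) [Field F₀] [CharZero F₀]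
    (hfg : ∃ S : Finset F₀, IntermediateField.adjoin ℚ (S : Set F₀) = ⊤) :
    {x : ℕ × ℕ × Projectivization F₀ (Fin 3 → F₀) |
      x.2.1 < x.1 ∧ 0 < x.2.1 ∧
      ∃ (Z : Fin 3 → F₀) (hZ : Z ≠ 0), x.2.2 = Projectivization.mk F₀ Z hZ ∧
        (3 : F₀) ^ x.1 * Z 0 ^ 3 + (3 : F₀) ^ x.2.1 * Z 1 ^ 3 + Z 2 ^ 3 = 0 ∧
        (3 : F₀) ^ x.1 * Z 0 + (3 : F₀) ^ x.2.1 * Z 1 + Z 2 = 0}.Finite := by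
  have := IntermediateField.fg_top_iff.1 hfg
  have := PowerSystem.finiteDimensional_algebraicClosure ℚ F₀
  exact finitely_many_solutions_of_power_system_general F₀
end

section
/- Let F₀ be a field of characteristic 0, let r₁, r₂ ∈ {0, 1, 2}, and let q₁, q₂ be integers with q₁ > q₂ ≥ 0 and 3q₁ + r₁ > 3q₂ + r₂ > 0. Then there is no nonzero triple (Z₁, Z₂, Z₃) ∈ F₀³ with Z₁Z₂Z₃ = 0 satisfying both 3^{r₁}Z₁³ + 3^{r₂}Z₂³ + Z₃³ = 0 and 9^{q₁}Z₁ + 9^{q₂}Z₂ + Z₃ = 0. -/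
/-!
If one coordinate vanishes, the other two are a common zero of a binary form `a X ^ n + b Y ^ n` and
a linear form `c X + d Y`, hence both vanish as soon as the resultant of the two forms is nonzero.
Here `n = 3` and each resultant is a difference of two powers of `3`, so in characteristic zero it
is nonzero when the exponents differ.
-/

section Resultant

variable {R : Type*} [CommRing R] {n : ℕ}

/-- The resultant of the binary forms `a X ^ n + b Y ^ n` and `c X + d Y`, computed as the value of
the former at the zero `(d, -c)` of the latter. -/
def diagonalLinearResultant (n : ℕ) (a b c d : R) : R :=
  a * d ^ n + b * (-c) ^ n

theorem diagonalLinearResultant_mul_pow_left_eq_zero {a b c d x y : R}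
    (hdiag : a * x ^ n + b * y ^ n = 0) (hlin : c * x + d * y = 0) :
    diagonalLinearResultant n a b c d * x ^ n = 0 :=
  calc
    (a * d ^ n + b * (-c) ^ n) * x ^ n = a * d ^ n * x ^ n + b * (-c * x) ^ n := by ring
    _ = a * d ^ n * x ^ n + b * (d * y) ^ n := by
      rw [show -c * x = d * y by linear_combination -hlin]
    _ = d ^ n * (a * x ^ n + b * y ^ n) := by ring
    _ = 0 := by rw [hdiag, mul_zero]

theorem diagonalLinearResultant_mul_pow_right_eq_zero {a b c d x y : R}
    (hdiag : a * x ^ n + b * y ^ n = 0) (hlin : c * x + d * y = 0) :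
    diagonalLinearResultant n a b c d * y ^ n = 0 :=
  calc
    (a * d ^ n + b * (-c) ^ n) * y ^ n = a * (d * y) ^ n + b * (-c) ^ n * y ^ n := by ring
    _ = a * (-c * x) ^ n + b * (-c) ^ n * y ^ n := by
      rw [show d * y = -c * x by linear_combination hlin]
    _ = (-c) ^ n * (a * x ^ n + b * y ^ n) := by ring
    _ = 0 := by rw [hdiag, mul_zero]

theorem eq_zero_of_diagonalLinearResultant_ne_zero [NoZeroDivisors R] {a b c d x y : R}
    (hres : diagonalLinearResultant n a b c d ≠ 0)
    (hdiag : a * x ^ n + b * y ^ n = 0) (hlin : c * x + d * y = 0) : x = 0 ∧ y = 0 :=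
  ⟨eq_zero_of_pow_eq_zero <| (mul_eq_zero_iff_left hres).mp <|
      diagonalLinearResultant_mul_pow_left_eq_zero hdiag hlin,
    eq_zero_of_pow_eq_zero <| (mul_eq_zero_iff_left hres).mp <|
      diagonalLinearResultant_mul_pow_right_eq_zero hdiag hlin⟩

theorem eq_zero_of_diagonal_of_linear_of_mul_eq_zero [NoZeroDivisors R] (hn : n ≠ 0)
    {a₁ a₂ a₃ b₁ b₂ b₃ x y z : R}
    (hres₁₂ : diagonalLinearResultant n a₁ a₂ b₁ b₂ ≠ 0)
    (hres₁₃ : diagonalLinearResultant n a₁ a₃ b₁ b₃ ≠ 0)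
    (hres₂₃ : diagonalLinearResultant n a₂ a₃ b₂ b₃ ≠ 0)
    (hprod : x * y * z = 0)
    (hdiag : a₁ * x ^ n + a₂ * y ^ n + a₃ * z ^ n = 0)
    (hlin : b₁ * x + b₂ * y + b₃ * z = 0) : x = 0 ∧ y = 0 ∧ z = 0 := by
  obtain (rfl | rfl) | rfl : (x = 0 ∨ y = 0) ∨ z = 0 := by simpa only [mul_eq_zero] using hprod
  all_goals simp only [zero_pow hn, mul_zero, zero_add, add_zero] at hdiag hlin
  · exact ⟨rfl, eq_zero_of_diagonalLinearResultant_ne_zero hres₂₃ hdiag hlin⟩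
  · obtain ⟨hx, hz⟩ := eq_zero_of_diagonalLinearResultant_ne_zero hres₁₃ hdiag hlin
    exact ⟨hx, rfl, hz⟩
  · obtain ⟨hx, hy⟩ := eq_zero_of_diagonalLinearResultant_ne_zero hres₁₂ hdiag hlin
    exact ⟨hx, hy, rfl⟩

theorem diagonalLinearResultant_pow (hn : Odd n) (t : R) (r s p q : ℕ) :
    diagonalLinearResultant n (t ^ r) (t ^ s) (t ^ p) (t ^ q) =
      t ^ (r + q * n) - t ^ (s + p * n) := by
  rw [diagonalLinearResultant, hn.neg_pow]
  ring

end Resultant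

section CharZero

variable {R : Type*} [CommRing R] [CharZero R]

theorem diagonalLinearResultant_natCast_pow_ne_zero {n : ℕ} (hn : Odd n) {t : ℕ} (ht : 2 ≤ t)
    {r s p q : ℕ} (hexp : r + q * n ≠ s + p * n) :
    diagonalLinearResultant n ((t : R) ^ r) (t ^ s) (t ^ p) (t ^ q) ≠ 0 := by
  have pow_ne : t ^ (r + q * n) ≠ t ^ (s + p * n) := (Nat.pow_right_injective ht).ne hexp
  rw [diagonalLinearResultant_pow hn, sub_ne_zero]
  exact_mod_cast pow_ne

theorem diagonalLinearResultant_three_pow_nine_pow_ne_zero {r s p q : ℕ}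
    (hexp : r + 6 * q ≠ s + 6 * p) :
    diagonalLinearResultant 3 ((3 : R) ^ r) (3 ^ s) (9 ^ p) (9 ^ q) ≠ 0 := by
  have nine_pow (k : ℕ) : (9 : R) ^ k = 3 ^ (2 * k) := by
    rw [pow_mul]
    norm_num
  rw [nine_pow, nine_pow]
  exact_mod_cast diagonalLinearResultant_natCast_pow_ne_zero (R := R) (n := 3) (by decide)
    (by norm_num : 2 ≤ 3) (by lia : r + 2 * q * 3 ≠ s + 2 * p * 3)

theorem no_degenerate_solutions_general [NoZeroDivisors R] {r₁ r₂ q₁ q₂ : ℕ}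
    (hexp₁ : r₁ ≠ 6 * q₁) (hexp₂ : r₂ ≠ 6 * q₂) (hexp₁₂ : r₁ + 6 * q₂ ≠ r₂ + 6 * q₁) :
    ¬ ∃ Z₁ Z₂ Z₃ : R, (Z₁, Z₂, Z₃) ≠ (0, 0, 0) ∧ Z₁ * Z₂ * Z₃ = 0 ∧
      (3 : R) ^ r₁ * Z₁ ^ 3 + (3 : R) ^ r₂ * Z₂ ^ 3 + Z₃ ^ 3 = 0 ∧
      (9 : R) ^ q₁ * Z₁ + (9 : R) ^ q₂ * Z₂ + Z₃ = 0 := by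
  rintro ⟨Z₁, Z₂, Z₃, hne, hprod, hcubic, hlin⟩
  -- The coefficients `1` of `Z₃` are written `3 ^ 0` and `9 ^ 0`, to match the other two.
  obtain ⟨rfl, rfl, rfl⟩ := eq_zero_of_diagonal_of_linear_of_mul_eq_zero three_ne_zero
    (diagonalLinearResultant_three_pow_nine_pow_ne_zero hexp₁₂)
    (diagonalLinearResultant_three_pow_nine_pow_ne_zero (s := 0) (q := 0) (by simpa using hexp₁))
    (diagonalLinearResultant_three_pow_nine_pow_ne_zero (s := 0) (q := 0) (by simpa using hexp₂))
    hprod (by simpa using hcubic) (by simpa using hlin)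
  exact hne rfl

end CharZero

/-- **Degenerate solutions (end of proof of Theorem `thm:precise 2`):** over a field `F₀` of
characteristic `0`, for `r₁, r₂ ∈ {0, 1, 2}` and integers `q₁ > q₂ ≥ 0` with
`3q₁ + r₁ > 3q₂ + r₂ > 0`, the system `3^r₁ Z₁³ + 3^r₂ Z₂³ + Z₃³ = 0`,
`9^q₁ Z₁ + 9^q₂ Z₂ + Z₃ = 0` has no nonzero solution `(Z₁, Z₂, Z₃)` with `Z₁Z₂Z₃ = 0`. -/
theorem no_degenerate_solutions
    (F₀ : Type) [Field F₀] [CharZero F₀]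
    (r₁ r₂ : ℕ) (hr₁ : r₁ ≤ 2) (hr₂ : r₂ ≤ 2)
    (q₁ q₂ : ℕ) (hq : q₂ < q₁)
    (h₁ : 3 * q₂ + r₂ < 3 * q₁ + r₁) (h₂ : 0 < 3 * q₂ + r₂) :
    ¬ ∃ Z₁ Z₂ Z₃ : F₀, (Z₁, Z₂, Z₃) ≠ (0, 0, 0) ∧ Z₁ * Z₂ * Z₃ = 0 ∧
      (3 : F₀) ^ r₁ * Z₁ ^ 3 + (3 : F₀) ^ r₂ * Z₂ ^ 3 + Z₃ ^ 3 = 0 ∧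
      (9 : F₀) ^ q₁ * Z₁ + (9 : F₀) ^ q₂ * Z₂ + Z₃ = 0 :=
  no_degenerate_solutions_general (by omega) (by omega) (by omega)
end
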